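/- arXiv:0808.1775 — 6 statements merged into one kernel-verified Lean document; each statement's English description precedes it below -/
import Mathlib

section
/- Let G be a finite group containing no subgroup isomorphic to the Klein four-group (equivalently, every subgroup of G of order 4 is cyclic). Then an element g ∈ G of order 2 lies in the center of G if and only if g is the unique element of order 2 in G. -/
/-!
Uniqueness gives centrality because every conjugate of `g` is again an involution. Conversely, if
`g` is central and `x ≠ g` is another involution, then `{1, g, x, g * x}` is a subgroup of order 4
in which every element squares to `1`, so it has no element of order 4 and is not cyclic.
-/

/-- The four-group `{1, a, b, a * b}` generated by two commuting elements squaring to `1`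
(of order 4 when `1`, `a`, `b` are distinct). -/
def fourSubgroup {G : Type*} [Group G] (a b : G) (ha : a * a = 1) (hb : b * b = 1)
    (hab : a * b = b * a) : Subgroup G where
  carrier := {1, a, b, a * b}
  one_mem' := by simp
  mul_mem' := by
    have h1 : a * (a * b) = b := by rw [← mul_assoc, ha, one_mul]
    have h2 : b * (a * b) = a := by rw [hab, ← mul_assoc, hb, one_mul]
    have h3 : a * b * a = b := by rw [hab, mul_assoc, ha, mul_one]
    have h4 : a * b * b = a := by rw [mul_assoc, hb, mul_one]
    have h5 : a * b * (a * b) = 1 := by rw [mul_assoc, h2, ha]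
    rintro x y (rfl | rfl | rfl | rfl) (rfl | rfl | rfl | rfl) <;>
      simp [ha, hb, h1, h2, h3, h4, h5, ← hab]
  inv_mem' := by
    have h1 : a⁻¹ = a := inv_eq_of_mul_eq_one_left ha
    have h2 : b⁻¹ = b := inv_eq_of_mul_eq_one_left hb
    rintro x (rfl | rfl | rfl | rfl) <;> simp [h1, h2, ← hab]

/-- In a finite group in which every subgroup of order 4 is cyclic (i.e. containing no
Klein four-group), an involution is central if and only if it is the unique involution. -/
theorem stmt0 {G : Type*} [Group G] [Fintype G]
    (h4 : ∀ H : Subgroup G, Nat.card H = 4 → IsCyclic H)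
    (g : G) (hg : orderOf g = 2) :
    g ∈ Subgroup.center G ↔ ∀ x : G, orderOf x = 2 → x = g := by
  constructor
  · intro hc x hx
    by_contra hne
    obtain ⟨hg2, hg1⟩ := orderOf_eq_prime_iff.1 hg
    obtain ⟨hx2, hx1⟩ := orderOf_eq_prime_iff.1 hx
    rw [pow_two] at hg2 hx2
    have hcomm : g * x = x * g := (Subgroup.mem_center_iff.1 hc x).symm
    have hcard : Nat.card (fourSubgroup g x hg2 hx2 hcomm) = 4 := by
      change Set.ncard ({1, g, x, g * x} : Set G) = 4
      have hgx : (1 : G) ≠ g * x := fun h =>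
        hne (mul_left_cancel (h.symm.trans hg2.symm))
      rw [Set.ncard_insert_of_notMem, Set.ncard_insert_of_notMem, Set.ncard_pair]
      · simpa using hg1
      · simp [Ne.symm hne, hx1]
      · simp [hg1.symm, hx1.symm, hgx]
    have := h4 _ hcard
    obtain ⟨y, hy⟩ := IsCyclic.exists_ofOrder_eq_natCard (α := fourSubgroup g x hg2 hx2 hcomm)
    have hy2 : y ^ 2 = 1 := by
      obtain ⟨y, hmem⟩ := y
      apply Subtype.ext
      change y ^ 2 = 1
      rcases hmem with rfl | rfl | rfl | rfl
      · simp
      · rw [pow_two, hg2]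
      · rw [pow_two, hx2]
      · rw [Commute.mul_pow hcomm, pow_two, pow_two, hg2, hx2, one_mul]
    have hle := Nat.le_of_dvd two_pos (orderOf_dvd_of_pow_eq_one hy2)
    omega
  · intro h
    rw [Subgroup.mem_center_iff]
    intro y
    have hconj : y * g * y⁻¹ = g := h _ (by
      rw [← hg]
      exact orderOf_injective (MulAut.conj y).toMonoidHom (MulAut.conj y).injective g)
    exact mul_inv_eq_iff_eq_mul.1 hconj
end

section
/- Let G be a finite group such that every Sylow p-subgroup of G (for every prime p) is either cyclic or isomorphic to a generalized quaternion group Q(2^k) (the dicyclic group of order 2^k, k ≥ 3). If G is not metacyclic, then G has a unique element g of order 2, this g is central, g is a square (g = h² for some h ∈ G), and 4 divides the order of G. -/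
/-!
If all Sylow subgroups of `G` are cyclic, then the derived subgroup and its quotient are cyclic and
`G` is metacyclic. Otherwise some Sylow `2`-subgroup is generalized quaternion, and its involution
is the square of an element of order four. What has to be shown is that this involution is the only
one of `G`; it is then central. This is the Brauer–Suzuki theorem for the groups at hand, proved
here without characters.

The hypothesis is weakened to `Good`: odd `p`-subgroups are cyclic and distinct involutions do not
commute. Then all involutions are conjugate, and the product of two distinct ones has odd order. In
a minimal counterexample (`MinCex`), every proper subgroup with two involutions has cyclic Sylow
subgroups, hence a cyclic derived subgroup containing all products of two of its involutions.

Call `line a b` the set of involutions inverting `a * b`, for distinct involutions `a`, `b`.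
Working in the normalizer of `⟨a * b⟩`, one sees that a line is determined by any two of its points
(`MinCex.line_eq`), that it is a principal homogeneous space for a cyclic group of odd order, its
translations, and that no nontrivial translation is centralized by an involution
(`MinCex.not_commute`). The involutions therefore form a linear space on which `G` acts. An element
fixing two points, but not all, fixes only points of the line through them
(`MinCex.mem_line_of_fixed`). An element stabilizing a line without fixing any of its points has
a power that is a nontrivial translation (`MinCex.exists_pow_mem`); consequently it fixes no
involution at all, and the line is determined by the element (`MinCex.line_unique`).

Burnside counting on `G` and on the stabilizers of the lines shows that these properties leave room
for a single line only (`line_eq_all`). Then the translations form a cyclic normal subgroup, which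
is centralized by the derived subgroup. But a noncyclic `2`-subgroup forces an involution into the
derived subgroup, and no involution centralizes a nontrivial translation.
-/

/-- A group is metacyclic if it has a cyclic normal subgroup with cyclic quotient. -/
def IsMetacyclic (G : Type*) [Group G] : Prop :=
  ∃ (N : Subgroup G) (_ : N.Normal), IsCyclic N ∧ IsCyclic (G ⧸ N)

/-! ### Involutions and `2`-subgroups -/

/-- `a` is an involution, that is, an element of order two. -/
def Invo {G : Type*} [Group G] (a : G) : Prop := a ≠ 1 ∧ a * a = 1

/-- The form in which the hypothesis on Sylow subgroups is used. Unlike that hypothesis it is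
visibly inherited by subgroups: subgroups of odd prime power order are cyclic, and distinct
involutions never commute. -/
structure Good (G : Type*) [Group G] : Prop where
  odd : ∀ p : ℕ, p.Prime → p ≠ 2 → ∀ P : Subgroup G, IsPGroup p P → IsCyclic P
  comm : ∀ a b : G, Invo a → Invo b → a * b = b * a → a = b

section basics
variable {G : Type*} [Group G]

theorem invo_iff {a : G} : Invo a ↔ orderOf a = 2 := by
  rw [orderOf_eq_prime_iff (p := 2), Invo, sq, and_comm]

theorem Invo.inv {a : G} (h : Invo a) : a⁻¹ = a := inv_eq_of_mul_eq_one_left h.2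

theorem Invo.conj {a : G} (h : Invo a) (g : G) : Invo (g * a * g⁻¹) := by
  refine ⟨fun e => h.1 ?_, ?_⟩
  · simpa using e
  · have : g * a * g⁻¹ * (g * a * g⁻¹) = g * (a * a) * g⁻¹ := by group
    rw [this, h.2]; group

theorem Good.subgroup (hG : Good G) (H : Subgroup G) : Good H where
  odd p hp hp2 P hP := by
    have := hG.odd p hp hp2 _ (hP.map H.subtype)
    exact isCyclic_of_surjective _
      (P.equivMapOfInjective H.subtype H.subtype_injective).symm.surjective
  comm a b ha hb hab := by
    refine Subtype.ext (hG.comm a b ?_ ?_ ?_)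
    · exact ⟨fun h => ha.1 (Subtype.ext h), congrArg Subtype.val ha.2⟩
    · exact ⟨fun h => hb.1 (Subtype.ext h), congrArg Subtype.val hb.2⟩
    · exact congrArg Subtype.val hab

theorem Invo.isPGroup_zpowers {a : G} (h : Invo a) : IsPGroup 2 (Subgroup.zpowers a) :=
  IsPGroup.of_card (n := 1) (by rw [Nat.card_zpowers, invo_iff.mp h, pow_one])

/-- A nontrivial subgroup of a finite `2`-group contains an involution. -/
theorem IsPGroup.exists_invo [Finite G] (hP : IsPGroup 2 G) (N : Subgroup G)
    (hN : N ≠ ⊥) : ∃ z ∈ N, Invo z := by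
  have h2 : 2 ∣ Nat.card N := by
    have : Nontrivial N := (Subgroup.nontrivial_iff_ne_bot N).mpr hN
    obtain ⟨n, hn0, hn⟩ := (hP.to_subgroup N).nontrivial_iff_card.mp inferInstance
    exact hn.symm ▸ dvd_pow_self _ (ne_of_gt hn0)
  obtain ⟨z, hz⟩ := exists_prime_orderOf_dvd_card' (G := N) 2 h2
  exact ⟨z, z.2, invo_iff.mpr (by rw [Subgroup.orderOf_coe, hz])⟩

/-- A central involution exists, and every involution commutes with it. -/
theorem Good.invo_unique_of_isPGroup [Finite G] (hG : Good G) (hP : IsPGroup 2 G)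
    {a b : G} (ha : Invo a) (hb : Invo b) : a = b := by
  have : Nontrivial G := ⟨a, 1, ha.1⟩
  obtain ⟨z, hz, hz2⟩ := hP.exists_invo (Subgroup.center G) hP.bot_lt_center.ne'
  have h := Subgroup.mem_center_iff.mp hz
  exact (hG.comm a z ha hz2 (h a)).trans (hG.comm b z hb hz2 (h b)).symm

/-- Sylow `2`-subgroups are conjugate and each contains at most one involution. -/
theorem Good.invo_conj [Finite G] (hG : Good G) {a b : G} (ha : Invo a) (hb : Invo b) :
    ∃ g, g * a * g⁻¹ = b := by
  obtain ⟨P, hP⟩ := ha.isPGroup_zpowers.exists_le_sylow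
  obtain ⟨R, hR⟩ := hb.isPGroup_zpowers.exists_le_sylow
  obtain ⟨g, rfl⟩ := MulAction.exists_smul_eq G P R
  refine ⟨g, ?_⟩
  have h1 : g * a * g⁻¹ ∈ (g • P) := by
    change _ ∈ ((g • P : Sylow 2 G) : Subgroup G)
    rw [Sylow.coe_subgroup_smul]
    exact Subgroup.smul_mem_pointwise_smul a (MulAut.conj g) _ (hP (Subgroup.mem_zpowers a))
  have h2 : b ∈ (g • P) := hR (Subgroup.mem_zpowers b)
  have key := (hG.subgroup (g • P : Sylow 2 G)).invo_unique_of_isPGroup (g • P).isPGroup'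
    (a := ⟨_, h1⟩) (b := ⟨_, h2⟩)
    ⟨fun e => (ha.conj g).1 (congrArg Subtype.val e), Subtype.ext (ha.conj g).2⟩
    ⟨fun e => hb.1 (congrArg Subtype.val e), Subtype.ext hb.2⟩
  exact congrArg Subtype.val key

/-- An abelian `2`-group with at most one involution is cyclic: by induction `x ^ 2 ^ j = 1` has at
most `2 ^ j` solutions, so the exponent equals the order. -/
theorem isCyclic_of_comm [Finite G] (hP : IsPGroup 2 G) (hcomm : ∀ a b : G, a * b = b * a)
    (huniq : ∀ a b : G, Invo a → Invo b → a = b) : IsCyclic G := by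
  let _ : CommGroup G := { ‹Group G› with mul_comm := hcomm }
  have hK : ∀ j : ℕ, Nat.card (powMonoidHom (2 ^ j) : G →* G).ker ≤ 2 ^ j := by
    intro j
    induction j with
    | zero =>
      have : (powMonoidHom (2 ^ 0) : G →* G).ker = ⊥ := by ext x; simp [MonoidHom.mem_ker]
      rw [this]; simp
    | succ j ih =>
      let f : (powMonoidHom (2 ^ (j + 1)) : G →* G).ker →* G :=
        (powMonoidHom 2 : G →* G).comp (Subgroup.subtype _)
      have h1 : Nat.card f.range ≤ 2 ^ j := by
        refine le_trans (Subgroup.card_le_of_le ?_) ih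
        rintro _ ⟨⟨x, hx⟩, rfl⟩
        rw [MonoidHom.mem_ker, powMonoidHom_apply] at hx ⊢
        change (x ^ 2) ^ 2 ^ j = 1
        rw [← pow_mul, ← pow_succ', hx]
      have h2 : Nat.card f.ker ≤ 2 := by
        classical
        refine (Nat.card_le_card_of_injective (fun x : f.ker => decide (x = 1)) ?_).trans
          (by simp : Nat.card Bool ≤ 2)
        intro x y hxy
        have hI : ∀ x : f.ker, x ≠ 1 → Invo ((x : _) : G) := fun x hx => by
          refine ⟨fun h => hx (Subtype.ext (Subtype.ext h)), ?_⟩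
          have := x.2
          rw [MonoidHom.mem_ker] at this
          rw [← sq]; exact this
        by_cases hx : x = 1
        · simp only [hx, decide_true] at hxy
          rw [hx, of_decide_eq_true hxy.symm]
        · have hy : y ≠ 1 := by
            rintro rfl; simp [hx] at hxy
          exact Subtype.ext (Subtype.ext (huniq _ _ (hI x hx) (hI y hy)))
      rw [← Subgroup.card_mul_index f.ker, Subgroup.index_ker]
      exact (Nat.mul_le_mul h2 h1).trans_eq (pow_succ' 2 j).symm
  obtain ⟨n, hn⟩ := hP.exists_card_eq
  apply IsCyclic.of_exponent_eq_card
  obtain ⟨e, -, he⟩ := (Nat.dvd_prime_pow Nat.prime_two).mp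
    (hn ▸ Group.exponent_dvd_nat_card : Monoid.exponent G ∣ 2 ^ n)
  refine Nat.dvd_antisymm Group.exponent_dvd_nat_card ?_
  have h1 := hK e
  have h2 : (powMonoidHom (2 ^ e) : G →* G).ker = ⊤ := by
    ext x; simp [MonoidHom.mem_ker, ← he, Monoid.pow_exponent_eq_one]
  rw [h2, Subgroup.card_top, hn] at h1
  rw [he, hn]
  exact pow_dvd_pow 2 ((Nat.pow_le_pow_iff_right (by norm_num)).mp h1)

theorem Good.exists_invo_commutator [Finite G] (hG : Good G) (P : Subgroup G) (hP : IsPGroup 2 P)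
    (hnc : ¬ IsCyclic P) : ∃ z ∈ commutator G, Invo z := by
  have h : commutator P ≠ ⊥ := by
    intro h
    apply hnc
    apply isCyclic_of_comm hP
    · intro a b
      have : a * b * a⁻¹ * b⁻¹ ∈ commutator P :=
        Subgroup.commutator_mem_commutator (Subgroup.mem_top _) (Subgroup.mem_top _)
      rw [h, Subgroup.mem_bot, mul_inv_eq_one, mul_inv_eq_iff_eq_mul] at this
      exact this
    · exact fun a b => (hG.subgroup P).invo_unique_of_isPGroup hP
  obtain ⟨z, hz, hz2⟩ := hP.exists_invo (commutator P) h
  refine ⟨z, ?_, ⟨fun e => hz2.1 (Subtype.ext e), congrArg Subtype.val hz2.2⟩⟩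
  have := Subgroup.mem_map_of_mem P.subtype hz
  rw [Subgroup.map_subtype_commutator] at this
  exact Subgroup.commutator_mono le_top le_top this
end basics

/-! ### Groups with cyclic Sylow subgroups -/

/-- A finite cyclic group has at most one subgroup of each order. -/
theorem mem_zpowers_of_orderOf_eq {C : Type*} [Group C] [Finite C] [IsCyclic C] {x y : C}
    (h : orderOf x = orderOf y) : y ∈ Subgroup.zpowers x := by
  classical
  have := Fintype.ofFinite C
  have h1 : (Finset.univ.filter fun a : C => a ∈ Subgroup.zpowers x) =
      Finset.univ.filter fun a : C => a ^ orderOf x = 1 := by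
    refine Finset.eq_of_subset_of_card_le ?_ ?_
    · intro a ha
      simp only [Finset.mem_filter, Finset.mem_univ, true_and] at ha ⊢
      obtain ⟨i, rfl⟩ := ha
      simp only
      rw [← zpow_natCast, ← zpow_mul, mul_comm, zpow_mul, zpow_natCast, pow_orderOf_eq_one,
        one_zpow]
    · refine (IsCyclic.card_pow_eq_one_le (orderOf_pos x)).trans ?_
      rw [← Nat.card_zpowers x, ← Fintype.card_subtype]
      exact (Nat.card_eq_fintype_card).le
  have h2 : y ∈ Finset.univ.filter fun a : C => a ^ orderOf x = 1 := by
    simp [h, pow_orderOf_eq_one]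
  rw [← h1] at h2
  simpa using h2

/-- The automorphism group of a cyclic group is abelian, so commutators act trivially on a cyclic
normal subgroup. -/
theorem commutator_le_centralizer {G : Type*} [Group G] (N : Subgroup G) [N.Normal] [IsCyclic N] :
    commutator G ≤ Subgroup.centralizer (N : Set G) := by
  intro c hc
  have h := Abelianization.commutator_subset_ker
    ((IsCyclic.mulAutMulEquiv N).toMonoidHom.comp (MulAut.conjNormal (H := N))) hc
  rw [MonoidHom.mem_ker, MonoidHom.comp_apply] at h
  have h' : MulAut.conjNormal (H := N) c = 1 := by simpa using h
  rw [Subgroup.mem_centralizer_iff]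
  intro x hx
  have h2 := congrArg Subtype.val (DFunLike.congr_fun h' (⟨x, hx⟩ : N))
  rw [MulAut.conjNormal_apply] at h2
  simp only [MulAut.one_apply] at h2
  exact (mul_inv_eq_iff_eq_mul.mp h2).symm

section
variable {G : Type*} [Group G] [Finite G]

theorem mem_zpowers_of_mem {C : Subgroup G} [IsCyclic C] {x y : G} (hx : x ∈ C) (hy : y ∈ C)
    (h : orderOf x = orderOf y) : y ∈ Subgroup.zpowers x := by
  have h1 : (⟨y, hy⟩ : C) ∈ Subgroup.zpowers (⟨x, hx⟩ : C) :=
    mem_zpowers_of_orderOf_eq (by simpa using h)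
  obtain ⟨i, hi⟩ := h1
  exact ⟨i, congrArg Subtype.val hi⟩

/-- The two involutions are conjugate, so their product is a commutator. -/
theorem Good.mul_mem_commutator (hG : Good G) {s t : G} (hs : Invo s) (ht : Invo t) :
    s * t ∈ commutator G := by
  obtain ⟨g, rfl⟩ := hG.invo_conj hs ht
  have : s * g * s⁻¹ * g⁻¹ ∈ commutator G :=
    Subgroup.commutator_mem_commutator (Subgroup.mem_top _) (Subgroup.mem_top _)
  rw [hs.inv] at this
  convert this using 1
  group

/-- When all Sylow subgroups are cyclic the derived subgroup is cyclic, so products of two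
involutions commute with each other. -/
theorem Good.commute_of_isZGroup [IsZGroup G] (hG : Good G) {s t u : G} (hs : Invo s)
    (ht : Invo t) (hu : Invo u) : s * t * (s * u) = s * u * (s * t) := by
  have := IsZGroup.isCyclic_commutator G
  have h := IsCyclic.isMulCommutative (α := commutator G)
  exact congrArg Subtype.val (h.is_comm.comm
    (⟨_, hG.mul_mem_commutator hs ht⟩ : commutator G) ⟨_, hG.mul_mem_commutator hs hu⟩)

theorem Good.not_two_dvd_commutator [IsZGroup G] (hG : Good G) {a b : G} (ha : Invo a)
    (hb : Invo b) (hab : a ≠ b) : ¬ 2 ∣ Nat.card (commutator G) := by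
  intro h2
  have := IsZGroup.isCyclic_commutator G
  have h := IsCyclic.isMulCommutative (α := commutator G)
  obtain ⟨z, hz⟩ := exists_prime_orderOf_dvd_card' (G := commutator G) 2 h2
  have hz' : Invo (z : G) := invo_iff.mpr (by rw [Subgroup.orderOf_coe, hz])
  have key : ∀ a : G, Invo a → a ∈ commutator G := by
    intro a ha
    obtain ⟨g, rfl⟩ := hG.invo_conj hz' ha
    exact (inferInstance : (commutator G).Normal).conj_mem _ z.2 g
  exact hab (hG.comm a b ha hb (congrArg Subtype.val (h.is_comm.comm
    (⟨a, key a ha⟩ : commutator G) ⟨b, key b hb⟩)))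

/-- Let all Sylow subgroups be cyclic and let there be two involutions. If an involution `a` does
not invert an element `x` of prime order `r`, then it centralizes some element of order `r`.

When `r` divides the order of the derived subgroup `G'`, coprimality with the index of `G'` gives
`x ∈ G'`, and `x * (a * x * a⁻¹)` is centralized by `a`. Otherwise the coset `x G'` is stable under
conjugation by `a` and has odd size, so `a` centralizes some element of it, whose order is a
multiple of `r`. -/
theorem Good.inverts_or_exists [IsZGroup G] (hG : Good G) {a b x : G} {r : ℕ} (hr : r.Prime)
    (ha : Invo a) (hb : Invo b) (hab : a ≠ b) (hx : orderOf x = r) :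
    a * x * a⁻¹ = x⁻¹ ∨ ∃ y, orderOf y = r ∧ a * y = y * a := by
  have hcyc := IsZGroup.isCyclic_commutator G
  have hodd := hG.not_two_dvd_commutator ha hb hab
  have hcop := IsZGroup.coprime_commutator_index G
  by_cases hrd : r ∣ Nat.card (commutator G)
  · have hxM : x ∈ commutator G := by
      rw [← QuotientGroup.eq_one_iff, ← orderOf_eq_one_iff]
      refine Nat.eq_one_of_dvd_coprimes hcop ?_ (orderOf_dvd_natCard _)
      exact (orderOf_map_dvd (QuotientGroup.mk' (commutator G)) x).trans (hx ▸ hrd)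
    have hax : a * x * a⁻¹ ∈ commutator G :=
      (inferInstance : (commutator G).Normal).conj_mem _ hxM a
    have hcx : x * (a * x * a⁻¹) = a * x * a⁻¹ * x := by
      have h := IsCyclic.isMulCommutative (α := commutator G)
      exact congrArg Subtype.val (h.is_comm.comm (⟨x, hxM⟩ : commutator G) ⟨_, hax⟩)
    by_cases hy : x * (a * x * a⁻¹) = 1
    · left; exact eq_inv_of_mul_eq_one_right hy
    · right
      refine ⟨x * (a * x * a⁻¹), ?_, ?_⟩
      · have hr' : Fact r.Prime := ⟨hr⟩
        refine orderOf_eq_prime ?_ hy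
        rw [(show Commute x (a * x * a⁻¹) from hcx).mul_pow, conj_pow, ← hx, pow_orderOf_eq_one]
        group
      · rw [hcx]
        have h1 : a * (a * x * a⁻¹ * x) = (a * a) * x * a⁻¹ * x := by group
        have h2 : x * (a * x * a⁻¹) * a = x * a * x := by group
        rw [h1, ha.2, ← hcx, h2, ha.inv, one_mul]
  · right
    classical
    have := Fintype.ofFinite G
    -- Conjugation by `a` on the coset `x G'`, transported to `G'` by `e ↦ x * e`.
    let f : commutator G → commutator G := fun e =>
      ⟨x⁻¹ * a * x * e * a⁻¹, by
        have h1 := (inferInstance : (commutator G).Normal).conj_mem _ e.2 a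
        have h2 : x⁻¹ * a * x * a⁻¹ ∈ commutator G := by
          have : x⁻¹ * a * x⁻¹⁻¹ * a⁻¹ ∈ commutator G :=
            Subgroup.commutator_mem_commutator (Subgroup.mem_top _) (Subgroup.mem_top _)
          simpa using this
        have h3 := (commutator G).mul_mem h2 h1
        convert h3 using 1
        group⟩
    have hf : Function.Involutive f := by
      intro e
      apply Subtype.ext
      have : x⁻¹ * a * x * (x⁻¹ * a * x * e * a⁻¹) * a⁻¹ = x⁻¹ * (a * a) * x * e * (a * a)⁻¹ := by
        group
      change x⁻¹ * a * x * (x⁻¹ * a * x * e * a⁻¹) * a⁻¹ = e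
      rw [this, ha.2]; group
    have h2 : Fact (Nat.Prime 2) := ⟨Nat.prime_two⟩
    obtain ⟨e, he⟩ := Equiv.Perm.exists_fixed_point_of_prime (p := 2) (n := 1)
      (α := commutator G) (by rwa [← Nat.card_eq_fintype_card]) (σ := hf.toPerm)
      (by ext e; rw [pow_one, sq]; simp [hf e])
    have he' : x⁻¹ * a * x * e * a⁻¹ = e := congrArg Subtype.val he
    have hcom : a * (x * e) = x * e * a := by
      have : a * (x * e) = x * (x⁻¹ * a * x * e * a⁻¹) * a := by group
      rw [this, he']
    have hord : r ∣ orderOf (x * e) := by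
      have h3 : orderOf (QuotientGroup.mk' (commutator G) x) = r := by
        have hr' : Fact r.Prime := ⟨hr⟩
        refine orderOf_eq_prime (by rw [← map_pow, ← hx, pow_orderOf_eq_one, map_one]) ?_
        intro h
        have h4 : x ∈ commutator G := (QuotientGroup.eq_one_iff x).mp h
        exact hrd (hx ▸ Subgroup.orderOf_dvd_natCard _ h4)
      have h5 : QuotientGroup.mk' (commutator G) (x * e) = QuotientGroup.mk' (commutator G) x := by
        have h6 : QuotientGroup.mk' (commutator G) (e : G) = 1 :=
          (QuotientGroup.eq_one_iff (e : G)).mpr e.2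
        rw [map_mul, h6, mul_one]
      rw [← h3, ← h5]
      exact orderOf_map_dvd _ _
    obtain ⟨m, hm⟩ := hord
    refine ⟨(x * e) ^ m, ?_, (show Commute a (x * e) from hcom).pow_right m⟩
    have hpos := orderOf_pos (x * e)
    have hm0 : m ≠ 0 := by rintro rfl; omega
    rw [orderOf_pow_of_dvd hm0 ⟨r, by rw [hm, mul_comm]⟩, hm,
      Nat.mul_div_cancel _ (Nat.pos_of_ne_zero hm0)]

/-- If `a * b` had even order, the involution among its powers would commute with `a` and `b`, hence
equal both. -/
theorem Good.odd_orderOf (hG : Good G) {a b : G} (ha : Invo a) (hb : Invo b) (hab : a ≠ b) :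
    Odd (orderOf (a * b)) := by
  by_contra hev
  rw [Nat.not_odd_iff_even] at hev
  obtain ⟨m, hm⟩ := hev
  have hpos := orderOf_pos (a * b)
  have hI : Invo ((a * b) ^ m) := by
    refine ⟨pow_ne_one_of_lt_orderOf (by omega) (by omega), ?_⟩
    rw [← pow_add, ← hm, pow_orderOf_eq_one]
  have e1 : ∀ w : G, w * (a * b) * w⁻¹ = (a * b)⁻¹ → w * (a * b) ^ m = (a * b) ^ m * w := by
    intro w hw
    have := congrArg (· ^ m) hw
    simp only [conj_pow, inv_pow] at this
    rw [hI.inv] at this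
    exact mul_inv_eq_iff_eq_mul.mp this
  have h1 := hG.comm a _ ha hI (e1 a (by
    rw [mul_inv_rev, hb.inv, ha.inv, ← mul_assoc, ha.2, one_mul]))
  have h2 := hG.comm b _ hb hI (e1 b (by
    rw [mul_inv_rev, hb.inv, ha.inv]
    have : b * (a * b) * b = b * a * (b * b) := by group
    rw [this, hb.2, mul_one]))
  exact hab (h1.trans h2.symm)

/-- Sylow subgroups for odd primes `r` are cyclic, so all subgroups of order `r` are conjugate. -/
theorem Good.exists_conj_zpowers (hG : Good G) {r : ℕ} (hr : r.Prime) (hr2 : r ≠ 2) {x y : G}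
    (hx : orderOf x = r) (hy : orderOf y = r) : ∃ g, x ∈ Subgroup.zpowers (g * y * g⁻¹) := by
  have hr' : Fact r.Prime := ⟨hr⟩
  have hp : ∀ x : G, orderOf x = r → IsPGroup r (Subgroup.zpowers x) := fun x hx =>
    IsPGroup.of_card (n := 1) (by rw [Nat.card_zpowers, hx, pow_one])
  obtain ⟨P, hP⟩ := (hp y hy).exists_le_sylow
  obtain ⟨R, hR⟩ := (hp x hx).exists_le_sylow
  obtain ⟨g, rfl⟩ := MulAction.exists_smul_eq G P R
  refine ⟨g, ?_⟩
  have h1 : g * y * g⁻¹ ∈ ((g • P : Sylow r G) : Subgroup G) := by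
    rw [Sylow.coe_subgroup_smul]
    exact Subgroup.smul_mem_pointwise_smul y (MulAut.conj g) _ (hP (Subgroup.mem_zpowers y))
  have hc := hG.odd r hr hr2 _ (g • P).isPGroup'
  refine mem_zpowers_of_mem h1 (hR (Subgroup.mem_zpowers x)) ?_
  rw [hx, ← hy]
  exact orderOf_injective (MulAut.conj g).toMonoidHom (MulAut.conj g).injective y
end

/-! ### Lines of involutions -/

/-- The properties of a minimal counterexample to the uniqueness of the involution: some involution
lies in the derived subgroup, and a proper subgroup with two involutions has only cyclic Sylow
subgroups. -/
structure MinCex (G : Type*) [Group G] : Prop where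
  good : Good G
  invo_commutator : ∃ z ∈ commutator G, Invo z
  red : ∀ H : Subgroup G, H ≠ ⊤ → ∀ a ∈ H, ∀ b ∈ H, Invo a → Invo b → a ≠ b → IsZGroup H

/-- The line through the involutions `a` and `b`: the set of involutions inverting `a * b`. -/
def line {G : Type*} [Group G] (a b : G) : Set G :=
  {w | Invo w ∧ w * (a * b) * w⁻¹ = (a * b)⁻¹}

section lines
variable {G : Type*} [Group G]

theorem Invo.coe_mk {H : Subgroup G} {a : G} (ha : Invo a) (h : a ∈ H) : Invo (⟨a, h⟩ : H) :=
  ⟨fun e => ha.1 (congrArg Subtype.val e), Subtype.ext ha.2⟩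

theorem left_mem_line {a b : G} (ha : Invo a) (hb : Invo b) : a ∈ line a b := by
  refine ⟨ha, ?_⟩
  rw [mul_inv_rev, hb.inv, ha.inv, ← mul_assoc, ha.2, one_mul]

theorem right_mem_line {a b : G} (ha : Invo a) (hb : Invo b) : b ∈ line a b := by
  refine ⟨hb, ?_⟩
  rw [mul_inv_rev, hb.inv, ha.inv]
  have : b * (a * b) * b = b * a * (b * b) := by group
  rw [this, hb.2, mul_one]

theorem mem_normalizer_zpowers {g k : G} (h : g * k * g⁻¹ ∈ Subgroup.zpowers k)
    [Finite G] : g ∈ Subgroup.normalizer (Subgroup.zpowers k : Set G) := by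
  have h1 : (Subgroup.zpowers k).map (MulAut.conj g).toMonoidHom = Subgroup.zpowers k := by
    refine Subgroup.eq_of_le_of_card_ge ?_ ?_
    · rw [MonoidHom.map_zpowers, Subgroup.zpowers_le]
      exact h
    · exact (Nat.card_congr ((Subgroup.zpowers k).equivMapOfInjective _
        (MulAut.conj g).injective).toEquiv).le
  rw [Subgroup.mem_normalizer_iff]
  intro x
  constructor
  · intro hx
    rw [← h1]
    exact ⟨x, hx, rfl⟩
  · intro hx
    rw [← h1] at hx
    obtain ⟨y, hy, e⟩ := hx
    have : y = x := (MulAut.conj g).injective e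
    exact this ▸ hy

theorem line_le_normalizer [Finite G] {a b w : G} (hw : w ∈ line a b) :
    w ∈ Subgroup.normalizer (Subgroup.zpowers (a * b) : Set G) :=
  mem_normalizer_zpowers (hw.2 ▸ Subgroup.inv_mem _ (Subgroup.mem_zpowers _))

theorem mem_normalizer_line_of_commute {a b g : G} (h : g * (a * b) = a * b * g) :
    g ∈ Subgroup.normalizer (line a b) := by
  have key : ∀ g : G, Commute g (a * b) → ∀ w ∈ line a b, g * w * g⁻¹ ∈ line a b := by
    intro g h w hw
    refine ⟨hw.1.conj g, ?_⟩
    have h1 : g⁻¹ * (a * b) * g = a * b := by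
      rw [mul_assoc, ← h.eq]; group
    have h2 : g * (a * b)⁻¹ * g⁻¹ = (a * b)⁻¹ := by
      rw [h.inv_right.eq]; group
    have : g * w * g⁻¹ * (a * b) * (g * w * g⁻¹)⁻¹ = g * (w * (g⁻¹ * (a * b) * g) * w⁻¹) * g⁻¹ := by
      group
    rw [this, h1, hw.2, h2]
  rw [Subgroup.mem_set_normalizer_iff]
  refine fun w => ⟨key g h w, fun hw => ?_⟩
  have := key g⁻¹ (Commute.inv_left h) _ hw
  have e : g⁻¹ * (g * w * g⁻¹) * g⁻¹⁻¹ = w := by group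
  rwa [e] at this

theorem Invo.mul_cancel {a : G} (ha : Invo a) (x : G) : a * (a * x) = x := by
  rw [← mul_assoc, ha.2, one_mul]

theorem ne_mul_self {a x : G} (hx1 : x ≠ 1) : a ≠ a * x := by
  intro h; exact hx1 (by simpa using h.symm)

theorem mem_line_of_commute {u v w : G} (hu : Invo u) (hv : Invo v) (hw : Invo w)
    (h : u * v * (u * w) = u * w * (u * v)) : w ∈ line u v := by
  refine ⟨hw, ?_⟩
  rw [mul_inv_rev, hu.inv, hv.inv, mul_inv_eq_iff_eq_mul]
  simp only [mul_assoc] at h ⊢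
  exact (mul_left_cancel h).symm

theorem Good.not_commute_left (hG : Good G) {a b : G} (ha : Invo a) (hb : Invo b) (hab : a ≠ b) :
    a * (a * b) ≠ a * b * a := by
  intro h
  have h2 : b = a * b * a := by
    rw [← h, ← mul_assoc, ha.2, one_mul]
  refine hab (hG.comm a b ha hb ?_)
  calc a * b = a * b * (a * a) := by rw [ha.2, mul_one]
    _ = a * b * a * a := by group
    _ = b * a := by rw [← h2]

end lines

namespace MinCex
variable {G : Type*} [Group G] [Finite G]

theorem commute_of_mem (hG : MinCex G) {H : Subgroup G} (hH : IsZGroup H) {s t u : G}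
    (hsH : s ∈ H) (htH : t ∈ H) (huH : u ∈ H) (hs : Invo s) (ht : Invo t) (hu : Invo u) :
    s * t * (s * u) = s * u * (s * t) :=
  congrArg Subtype.val ((hG.good.subgroup H).commute_of_isZGroup
    (hs.coe_mk hsH) (ht.coe_mk htH) (hu.coe_mk huH))

/-- If `⟨a * b⟩` were normal, the derived subgroup would centralize it; but it contains every
involution, in particular `a`, which inverts `a * b`. -/
theorem normalizer_ne_top (hG : MinCex G) {a b : G} (ha : Invo a) (hb : Invo b) (hab : a ≠ b) :
    Subgroup.normalizer (Subgroup.zpowers (a * b) : Set G) ≠ ⊤ := by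
  intro h
  have hn : (Subgroup.zpowers (a * b)).Normal := Subgroup.normalizer_eq_top_iff.mp h
  obtain ⟨z, hz, hz2⟩ := hG.invo_commutator
  obtain ⟨g, rfl⟩ := hG.good.invo_conj hz2 ha
  have h1 := commutator_le_centralizer (Subgroup.zpowers (g * z * g⁻¹ * b))
    ((inferInstance : (commutator G).Normal).conj_mem _ hz g)
  exact hG.good.not_commute_left ha hb hab
    (Subgroup.mem_centralizer_iff.mp h1 _ (Subgroup.mem_zpowers _)).symm

theorem isZGroup_normalizer (hG : MinCex G) {a b : G} (ha : Invo a) (hb : Invo b) (hab : a ≠ b) :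
    IsZGroup (Subgroup.normalizer (Subgroup.zpowers (a * b) : Set G)) :=
  hG.red _ (hG.normalizer_ne_top ha hb hab) a (line_le_normalizer (left_mem_line ha hb)) b
    (line_le_normalizer (right_mem_line ha hb)) ha hb hab

/-- The product of two distinct involutions is centralized by no involution: inside the normalizer
of `⟨a * b⟩` the involution `t` is conjugate to `a`, which inverts `a * b`. -/
theorem not_commute (hG : MinCex G) {a b t : G} (ha : Invo a) (hb : Invo b) (hab : a ≠ b)
    (ht : Invo t) : t * (a * b) ≠ a * b * t := by
  intro h
  let M := Subgroup.normalizer (Subgroup.zpowers (a * b) : Set G)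
  have haM : a ∈ M := line_le_normalizer (left_mem_line ha hb)
  have htM : t ∈ M := mem_normalizer_zpowers (by
    rw [h, mul_assoc, mul_inv_cancel, mul_one]; exact Subgroup.mem_zpowers _)
  obtain ⟨⟨g, hgM⟩, hg⟩ := (hG.good.subgroup M).invo_conj (ht.coe_mk htM) (ha.coe_mk haM)
  have hg' : g * t * g⁻¹ = a := congrArg Subtype.val hg
  have hx : g⁻¹ * (a * b) * g ∈ Subgroup.zpowers (a * b) := by
    have := (Subgroup.mem_normalizer_iff.mp (M.inv_mem hgM) (a * b)).mp (Subgroup.mem_zpowers _)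
    simpa using this
  obtain ⟨i, hi⟩ := hx
  have hi' : (a * b) ^ i = g⁻¹ * (a * b) * g := hi
  have hti : t * (g⁻¹ * (a * b) * g) = g⁻¹ * (a * b) * g * t := by
    rw [← hi']; exact (show Commute t (a * b) from h).zpow_right i
  apply hG.good.not_commute_left ha hb hab
  have e1 : g * t * g⁻¹ * (a * b) = g * (t * (g⁻¹ * (a * b) * g)) * g⁻¹ := by group
  have e2 : a * b * (g * t * g⁻¹) = g * (g⁻¹ * (a * b) * g * t) * g⁻¹ := by group
  have e3 : g * t * g⁻¹ * (a * b) = a * b * (g * t * g⁻¹) := by rw [e1, e2, hti]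
  rwa [hg'] at e3

theorem commute_of_line (hG : MinCex G) {a b u v w : G} (ha : Invo a) (hb : Invo b) (hab : a ≠ b)
    (hu : u ∈ line a b) (hv : v ∈ line a b) (hw : w ∈ line a b) :
    u * v * (u * w) = u * w * (u * v) :=
  hG.commute_of_mem (hG.isZGroup_normalizer ha hb hab) (line_le_normalizer hu)
    (line_le_normalizer hv) (line_le_normalizer hw) hu.1 hv.1 hw.1

/-- A line is determined by any two of its points. -/
theorem line_eq (hG : MinCex G) {a b u v : G} (ha : Invo a) (hb : Invo b) (hab : a ≠ b)
    (hu : u ∈ line a b) (hv : v ∈ line a b) (huv : u ≠ v) : line u v = line a b := by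
  have key : ∀ {a b : G}, Invo a → Invo b → a ≠ b → ∀ u ∈ line a b, ∀ v ∈ line a b,
      line a b ⊆ line u v := fun ha hb hab u hu v hv w hw =>
    mem_line_of_commute hu.1 hv.1 hw.1 (hG.commute_of_line ha hb hab hu hv hw)
  have h1 := key ha hb hab u hu v hv
  exact (key hu.1 hv.1 huv a (h1 (left_mem_line ha hb)) b (h1 (right_mem_line ha hb))).antisymm h1

theorem tri_mem_line (hG : MinCex G) {a b u v w : G} (ha : Invo a) (hb : Invo b) (hab : a ≠ b)
    (hu : u ∈ line a b) (hv : v ∈ line a b) (hw : w ∈ line a b) : u * v * w ∈ line a b := by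
  have h1 := hG.commute_of_line ha hb hab hv hu hw
  simp only [mul_assoc] at h1
  have h2 : u * v * w = w * v * u := by
    simpa only [mul_assoc] using mul_left_cancel h1
  refine ⟨⟨fun h => ?_, ?_⟩, ?_⟩
  · have h3 : v = u * w := by
      have : v = u⁻¹ * (u * v * w) * w⁻¹ := by group
      rw [this, h, mul_one, hu.1.inv, hw.1.inv]
    have h4 : u * w = w * u := by
      have : (u * w)⁻¹ = u * w := by rw [← h3]; exact hv.1.inv
      rw [← this, mul_inv_rev, hu.1.inv, hw.1.inv]
    have h5 := hG.good.comm u w hu.1 hw.1 h4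
    exact hv.1.1 (by rw [h3, h5, hw.1.2])
  · nth_rw 2 [h2]
    have : u * v * w * (w * v * u) = u * (v * (w * w) * v) * u := by group
    rw [this, hw.1.2, mul_one, hv.1.2, mul_one, hu.1.2]
  · have : u * v * w * (a * b) * (u * v * w)⁻¹ = u * (v * (w * (a * b) * w⁻¹) * v⁻¹) * u⁻¹ := by
      group
    rw [this, hw.2]
    have e : v * (a * b)⁻¹ * v⁻¹ = a * b := by
      have : v * (a * b)⁻¹ * v⁻¹ = (v * (a * b) * v⁻¹)⁻¹ := by group
      rw [this, hv.2, inv_inv]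
    rw [e, hu.2]

/-- The group of translations of the line through `a` and `b`: the elements `x` with `a * x` on the
line, equivalently the products of two points of the line. It acts regularly on the line by right
multiplication. -/
def translations (hG : MinCex G) {a b : G} (ha : Invo a) (hb : Invo b) (hab : a ≠ b) :
    Subgroup G where
  carrier := {x | a * x ∈ line a b}
  one_mem' := by simpa using left_mem_line ha hb
  mul_mem' {x y} hx hy := by
    have := hG.tri_mem_line ha hb hab hx (left_mem_line ha hb) hy
    have e : a * x * a * (a * y) = a * x * (a * a) * y := by group
    rw [e, ha.2, mul_one, mul_assoc] at this
    exact this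
  inv_mem' {x} hx := by
    have h1 := hG.tri_mem_line ha hb hab (left_mem_line ha hb) hx (left_mem_line ha hb)
    have h2 : x⁻¹ * a = a * x := by
      have := Invo.inv (show Invo (a * x) from And.left hx)
      rwa [mul_inv_rev, ha.inv] at this
    have h3 : a * x⁻¹ = a * (a * x) * a := by
      rw [← h2]
      have : a * (x⁻¹ * a) * a = a * x⁻¹ * (a * a) := by group
      rw [this, ha.2, mul_one]
    change a * x⁻¹ ∈ line a b
    rw [h3]; exact h1

section
variable (hG : MinCex G) {a b : G} (ha : Invo a) (hb : Invo b) (hab : a ≠ b)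

theorem mem_translations {x : G} : x ∈ hG.translations ha hb hab ↔ a * x ∈ line a b := Iff.rfl

theorem mul_mem_translations {s t : G} (hs : s ∈ line a b) (ht : t ∈ line a b) :
    s * t ∈ hG.translations ha hb hab := by
  rw [mem_translations, ← mul_assoc]
  exact hG.tri_mem_line ha hb hab (left_mem_line ha hb) hs ht

theorem translations_comm {x y : G} (hx : x ∈ hG.translations ha hb hab)
    (hy : y ∈ hG.translations ha hb hab) :
    x * y = y * x := by
  have h := hG.commute_of_line ha hb hab (left_mem_line ha hb) hx hy
  rwa [ha.mul_cancel, ha.mul_cancel] at h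

theorem not_commute_translations {x t : G} (hx : x ∈ hG.translations ha hb hab) (hx1 : x ≠ 1)
    (ht : Invo t) : t * x ≠ x * t := by
  have := hG.not_commute ha (And.left hx) (ne_mul_self hx1) ht
  rwa [ha.mul_cancel] at this

theorem line_translations {x : G} (hx : x ∈ hG.translations ha hb hab) (hx1 : x ≠ 1) :
    line a (a * x) = line a b :=
  hG.line_eq ha hb hab (left_mem_line ha hb) hx (ne_mul_self hx1)

theorem not_two_dvd_translations : ¬ 2 ∣ Nat.card (hG.translations ha hb hab) := by
  intro h
  obtain ⟨z, hz⟩ := exists_prime_orderOf_dvd_card' (G := hG.translations ha hb hab) 2 h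
  have hz' : Invo (z : G) := invo_iff.mpr (by rw [Subgroup.orderOf_coe, hz])
  exact hG.not_commute_translations ha hb hab z.2 hz'.1 hz' rfl

theorem conj_mem_translations {g x : G} (hg : g ∈ Subgroup.normalizer (line a b))
    (hx : x ∈ hG.translations ha hb hab) : g * x * g⁻¹ ∈ hG.translations ha hb hab := by
  rw [Subgroup.mem_set_normalizer_iff] at hg
  have h := hG.mul_mem_translations ha hb hab ((hg _).mp (left_mem_line ha hb)) ((hg _).mp hx)
  have e : g * a * g⁻¹ * (g * (a * x) * g⁻¹) = g * (a * a) * x * g⁻¹ := by group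
  rwa [e, ha.2, mul_one] at h

theorem isCyclic_translations : IsCyclic (hG.translations ha hb hab) := by
  have := hG.isZGroup_normalizer ha hb hab
  have hle : hG.translations ha hb hab ≤
      Subgroup.normalizer (Subgroup.zpowers (a * b) : Set G) := by
    intro x hx
    rw [← ha.mul_cancel x]
    exact Subgroup.mul_mem _ (line_le_normalizer (left_mem_line ha hb)) (line_le_normalizer hx)
  have : IsZGroup (hG.translations ha hb hab) :=
    IsZGroup.of_injective (Subgroup.inclusion_injective hle)
  let _ : CommGroup (hG.translations ha hb hab) :=
    { (inferInstance : Group (hG.translations ha hb hab)) with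
      mul_comm := fun x y => Subtype.ext (hG.translations_comm ha hb hab x.2 y.2) }
  infer_instance

end
end MinCex

/-! ### Counting fixed points on lines -/

open Subgroup Finset in
/-- Burnside's orbit-counting formula for a subgroup acting transitively by conjugation on a
nonempty finite set: the numbers of fixed points add up to `|N|`. -/
theorem burnside_count {G : Type*} [Group G] [Fintype G] [DecidableEq G] (N : Subgroup G)
    [DecidablePred (· ∈ N)] (S : Finset G) (hS : S.Nonempty)
    (hstab : ∀ g ∈ N, ∀ x ∈ S, g * x * g⁻¹ ∈ S)
    (htrans : ∀ x ∈ S, ∀ y ∈ S, ∃ g ∈ N, g * x * g⁻¹ = y) :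
    ∑ g with g ∈ N, #{x ∈ S | g * x * g⁻¹ = x} = #{g | g ∈ N} := by
  obtain ⟨x, hx⟩ := hS
  rw [Finset.card_eq_sum_card_fiberwise (f := fun g => g * x * g⁻¹) (t := S)
    (fun g hg => hstab g (by simpa using hg) x hx)]
  simp_rw [Finset.card_filter]
  rw [Finset.sum_comm]
  refine Finset.sum_congr rfl fun y hy => ?_
  obtain ⟨h, hh, hxy⟩ := htrans x hx y hy
  rw [← Finset.card_filter, ← Finset.card_filter]
  refine Finset.card_bij' (fun g _ => g * h) (fun g _ => g * h⁻¹) ?_ ?_ ?_ ?_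
  · intro g hg
    simp only [mem_filter, mem_univ, true_and] at hg ⊢
    refine ⟨N.mul_mem hg.1 hh, ?_⟩
    conv_rhs => rw [← hg.2, ← hxy]
    group
  · intro g hg
    simp only [mem_filter, mem_univ, true_and] at hg ⊢
    refine ⟨N.mul_mem hg.1 (N.inv_mem hh), ?_⟩
    conv_lhs => rw [← hxy]
    conv_rhs => rw [← hg.2]
    group
  · simp
  · simp

open Subgroup Finset in
/-- For a transitive conjugation action, the number of elements without fixed points equals
`∑ (fix g - 1)`, with truncated subtraction, so that only elements with at least two fixed points
contribute to the sum. -/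
theorem count_free {G : Type*} [Group G] [Fintype G] [DecidableEq G] (N : Subgroup G)
    [DecidablePred (· ∈ N)] (S : Finset G) (hS : S.Nonempty)
    (hstab : ∀ g ∈ N, ∀ x ∈ S, g * x * g⁻¹ ∈ S)
    (htrans : ∀ x ∈ S, ∀ y ∈ S, ∃ g ∈ N, g * x * g⁻¹ = y) :
    #{g | g ∈ N ∧ ∀ x ∈ S, g * x * g⁻¹ ≠ x} =
      ∑ g with g ∈ N, (#{x ∈ S | g * x * g⁻¹ = x} - 1) := by
  have h := burnside_count N S hS hstab htrans
  have h1 : ∀ g : G, #{x ∈ S | g * x * g⁻¹ = x} +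
      (if ∀ x ∈ S, g * x * g⁻¹ ≠ x then 1 else 0) = (#{x ∈ S | g * x * g⁻¹ = x} - 1) + 1 := by
    intro g
    split_ifs with hg
    · rw [Finset.filter_eq_empty_iff.mpr hg]; rfl
    · push Not at hg
      obtain ⟨x, hx, hgx⟩ := hg
      have : 0 < #{x ∈ S | g * x * g⁻¹ = x} :=
        Finset.card_pos.mpr ⟨x, by simp [hx, hgx]⟩
      omega
  have h2 := Finset.sum_congr (rfl : (Finset.univ.filter (· ∈ N)) = _) fun g _ => h1 g
  rw [Finset.sum_add_distrib, Finset.sum_add_distrib, h, ← Finset.card_filter,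
    Finset.filter_filter, Finset.sum_const, smul_eq_mul, mul_one] at h2
  omega

open Subgroup Finset in
/-- The counting argument. Let `G` act transitively by conjugation on `I`, and let `𝓛` be a family
of lines in `I` such that any two points lie on a line and every line is permuted transitively by
its stabilizer. Suppose that the fixed points of an element fixing at least two points, but not all,
lie on a line that it stabilizes; that an element stabilizing a line without fixing any of its
points has no fixed point in `I`; and that it does so for at most one line. Then every line is
all of `I`.

Write `φ g` for the sum of `fix_Λ g - 1` over the lines `Λ` stabilized by `g`. Pointwise
`fix_I g - 1 ≤ φ g`, while summation over `G` (via `count_free`) gives the opposite inequality, so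
there is equality at `g = 1`: the lines through a point already exhaust `∑ (|Λ| - 1)`, hence all
lines pass through every point. -/
theorem line_eq_all {G : Type*} [Group G] [Fintype G] [DecidableEq G]
    (I : Finset G) (𝓛 : Finset (Finset G))
    (hI : ∀ g, ∀ x ∈ I, g * x * g⁻¹ ∈ I)
    (hItrans : ∀ x ∈ I, ∀ y ∈ I, ∃ g, g * x * g⁻¹ = y)
    (hsub : ∀ Λ ∈ 𝓛, Λ ⊆ I) (hcard : ∀ Λ ∈ 𝓛, 1 < #Λ)
    (hjoin : ∀ x ∈ I, ∀ y ∈ I, x ≠ y → ∃ Λ ∈ 𝓛, x ∈ Λ ∧ y ∈ Λ)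
    (hLtrans : ∀ Λ ∈ 𝓛, ∀ x ∈ Λ, ∀ y ∈ Λ, ∃ g ∈ normalizer (Λ : Set G), g * x * g⁻¹ = y)
    (hfix : ∀ g : G, (∃ x ∈ I, g * x * g⁻¹ ≠ x) → ∀ x ∈ I, ∀ y ∈ I, x ≠ y →
      g * x * g⁻¹ = x → g * y * g⁻¹ = y →
      ∃ Λ ∈ 𝓛, g ∈ normalizer (Λ : Set G) ∧ ∀ w ∈ I, g * w * g⁻¹ = w → w ∈ Λ)
    (hfree : ∀ Λ ∈ 𝓛, ∀ g ∈ normalizer (Λ : Set G), (∀ x ∈ Λ, g * x * g⁻¹ ≠ x) →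
      ∀ x ∈ I, g * x * g⁻¹ ≠ x)
    (huniq : ∀ Λ ∈ 𝓛, ∀ Λ' ∈ 𝓛, ∀ g ∈ normalizer (Λ : Set G), g ∈ normalizer (Λ' : Set G) →
      (∀ x ∈ Λ, g * x * g⁻¹ ≠ x) → (∀ x ∈ Λ', g * x * g⁻¹ ≠ x) → Λ = Λ') :
    ∀ Λ ∈ 𝓛, Λ = I := by
  classical
  -- `f S g` is the number of fixed points of `g` on `S`.
  let f : Finset G → G → ℕ := fun S g => #{x ∈ S | g * x * g⁻¹ = x}
  let φ : G → ℕ := fun g =>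
    ∑ Λ ∈ 𝓛.filter (fun Λ : Finset G => g ∈ normalizer (Λ : Set G)), (f Λ g - 1)
  have hpencil : ∀ x ∈ I, #I - 1 ≤ ∑ Λ ∈ 𝓛 with x ∈ Λ, (#Λ - 1) := by
    intro x hx
    rw [← Finset.card_erase_of_mem hx]
    have : I.erase x ⊆ (𝓛.filter (x ∈ ·)).biUnion fun Λ => Λ.erase x := by
      intro y hy
      obtain ⟨hyx, hy⟩ := Finset.mem_erase.mp hy
      obtain ⟨Λ, hΛ, h1, h2⟩ := hjoin x hx y hy hyx.symm
      simp only [mem_biUnion, mem_filter, mem_erase]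
      exact ⟨Λ, ⟨hΛ, h1⟩, hyx, h2⟩
    refine (Finset.card_le_card this).trans (Finset.card_biUnion_le.trans ?_)
    refine Finset.sum_le_sum fun Λ hΛ => ?_
    rw [Finset.card_erase_of_mem (Finset.mem_filter.mp hΛ).2]
  have hpt : ∀ g, f I g - 1 ≤ φ g := by
    intro g
    by_cases hg : ∃ x ∈ I, g * x * g⁻¹ ≠ x
    · by_cases h2 : 1 < f I g
      · obtain ⟨x, hx, y, hy, hxy⟩ := Finset.one_lt_card.mp h2
        simp only [mem_filter] at hx hy
        obtain ⟨Λ, hΛ, hgΛ, hw⟩ := hfix g hg x hx.1 y hy.1 hxy hx.2 hy.2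
        have : f I g ≤ f Λ g := by
          refine Finset.card_le_card fun w hw' => ?_
          simp only [mem_filter] at hw' ⊢
          exact ⟨hw w hw'.1 hw'.2, hw'.2⟩
        refine (Nat.sub_le_sub_right this 1).trans ?_
        exact Finset.single_le_sum (f := fun Λ => f Λ g - 1) (fun _ _ => Nat.zero_le _)
          (Finset.mem_filter.mpr ⟨hΛ, hgΛ⟩)
      · omega
    · push Not at hg
      have hfS : ∀ S, S ⊆ I → f S g = #S := fun S hS => by
        simp only [f]
        rw [Finset.filter_true_of_mem fun x hx => hg x (hS hx)]
      rw [hfS I subset_rfl]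
      rcases I.eq_empty_or_nonempty with rfl | ⟨x, hx⟩
      · simp
      refine (hpencil x hx).trans ?_
      calc ∑ Λ ∈ 𝓛 with x ∈ Λ, (#Λ - 1) ≤ ∑ Λ ∈ 𝓛, (#Λ - 1) :=
            Finset.sum_le_sum_of_subset (Finset.filter_subset _ _)
        _ = φ g := by
          simp only [φ]
          rw [Finset.filter_true_of_mem]
          · exact Finset.sum_congr rfl fun Λ hΛ => by rw [hfS Λ (hsub Λ hΛ)]
          · intro Λ hΛ
            rw [mem_set_normalizer_iff]
            intro h
            constructor
            · intro hh
              rw [hg h (hsub Λ hΛ hh)]; exact hh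
            · intro hh
              have h3 := hI g⁻¹ _ (hsub Λ hΛ hh)
              have h4 : h ∈ I := by
                have e : g⁻¹ * (g * h * g⁻¹) * g⁻¹⁻¹ = h := by group
                rwa [e] at h3
              rwa [hg h h4] at hh
  intro Λ₀ hΛ₀
  have hIne : I.Nonempty := by
    obtain ⟨x, hx⟩ := Finset.card_pos.mp (zero_lt_one.trans (hcard Λ₀ hΛ₀))
    exact ⟨x, hsub _ hΛ₀ hx⟩
  have hsum : ∑ g, φ g ≤ ∑ g, (f I g - 1) := by
    have e1 := count_free (⊤ : Subgroup G) I hIne (fun g _ => hI g)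
      (fun x hx y hy => by simpa using hItrans x hx y hy)
    simp only [mem_top, true_and, Finset.filter_true] at e1
    rw [← e1]
    simp only [φ, Finset.sum_filter]
    rw [Finset.sum_comm]
    simp only [← Finset.sum_filter]
    have e2 : ∀ Λ ∈ 𝓛, ∑ g with g ∈ normalizer (Λ : Set G), (f Λ g - 1) =
        #{g | g ∈ normalizer (Λ : Set G) ∧ ∀ x ∈ Λ, g * x * g⁻¹ ≠ x} := fun Λ hΛ =>
      (count_free (normalizer (Λ : Set G)) Λ (Finset.card_pos.mp (zero_lt_one.trans (hcard Λ hΛ)))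
        (fun g hg x hx => (mem_set_normalizer_iff.mp hg x).mp hx) (hLtrans Λ hΛ)).symm
    rw [Finset.sum_congr rfl e2, ← Finset.card_biUnion]
    · refine Finset.card_le_card fun g hg => ?_
      simp only [mem_biUnion, mem_filter, mem_univ, true_and] at hg ⊢
      obtain ⟨Λ, hΛ, h1, h2⟩ := hg
      exact hfree Λ hΛ g h1 h2
    · intro Λ hΛ Λ' hΛ' hne
      refine Finset.disjoint_left.mpr ?_
      intro g hg hg'
      simp only [mem_filter, mem_univ, true_and] at hg hg'
      exact hne (huniq Λ hΛ Λ' hΛ' g hg.1 hg'.1 hg.2 hg'.2)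
  have hone : φ 1 ≤ f I 1 - 1 := by
    by_contra hlt
    exact absurd hsum (not_le.mpr
      (Finset.sum_lt_sum (fun g _ => hpt g) ⟨1, Finset.mem_univ _, not_le.mp hlt⟩))
  have hone' : ∑ Λ ∈ 𝓛, (#Λ - 1) ≤ #I - 1 := by
    simpa [φ, f, one_mem] using hone
  refine Finset.Subset.antisymm (hsub _ hΛ₀) fun x hx => ?_
  by_contra hxΛ
  have h1 : ∑ Λ ∈ insert Λ₀ (𝓛.filter (x ∈ ·)), (#Λ - 1) ≤ ∑ Λ ∈ 𝓛, (#Λ - 1) :=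
    Finset.sum_le_sum_of_subset
      (Finset.insert_subset hΛ₀ (Finset.filter_subset _ _))
  rw [Finset.sum_insert (by simp [hxΛ])] at h1
  have h2 := hpencil x hx
  have h3 := hcard Λ₀ hΛ₀
  omega

/-! ### Stabilizers of lines and the end of the minimal counterexample -/

/-- The vanishing of `H¹` for a cyclic group of order prime to `|T|`, in barycentric form: if `c` is
a cocycle for `σ` that vanishes at `o`, then the `o`-th root of `∏ i < o, c i` is a fixed point
of the affine map `x ↦ c 1 * σ x`. -/
theorem exists_fixed_of_coprime {T : Type*} [CommGroup T] [Finite T] (σ : T →* T) (c : ℕ → T)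
    (o : ℕ) (hc : ∀ i, c (i + 1) = c 1 * σ (c i)) (h0 : c 0 = 1) (ho : c o = 1)
    (hcop : (Nat.card T).Coprime o) : ∃ x, c 1 * σ x = x := by
  let γ := ∏ i ∈ Finset.range o, c i
  obtain ⟨x, hx⟩ := (powCoprime hcop).surjective γ
  have hx' : x ^ o = γ := hx
  refine ⟨x, (powCoprime hcop).injective ?_⟩
  change (c 1 * σ x) ^ o = x ^ o
  have h1 : ∏ i ∈ Finset.range o, c (i + 1) = γ := by
    have h2 := Finset.prod_range_succ c o
    rw [Finset.prod_range_succ', h0, ho, mul_one, mul_one] at h2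
    exact h2
  calc (c 1 * σ x) ^ o = c 1 ^ o * σ γ := by rw [mul_pow, ← map_pow, hx']
    _ = ∏ i ∈ Finset.range o, (c 1 * σ (c i)) := by
      rw [Finset.prod_mul_distrib, Finset.prod_const, Finset.card_range, map_prod]
    _ = ∏ i ∈ Finset.range o, c (i + 1) := Finset.prod_congr rfl fun i _ => (hc i).symm
    _ = x ^ o := by rw [h1, hx']

namespace MinCex
section
variable {G : Type*} [Group G] [Finite G]

/-- An element stabilizing a line acts on it as an affine map over the group of translations, hence
fixes a point when its order is prime to the number of translations. -/
theorem exists_fixed_line (hG : MinCex G) {a b : G} (ha : Invo a) (hb : Invo b)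
    (hab : a ≠ b) {g : G} (hg : g ∈ Subgroup.normalizer (line a b))
    (hcop : (Nat.card (hG.translations ha hb hab)).Coprime (orderOf g)) :
    ∃ w ∈ line a b, g * w * g⁻¹ = w := by
  let T := hG.translations ha hb hab
  let _ : CommGroup T :=
    { (inferInstance : Group T) with
      mul_comm := fun x y => Subtype.ext (hG.translations_comm ha hb hab x.2 y.2) }
  let σ : T →* T :=
    { toFun := fun x => ⟨g * x * g⁻¹, hG.conj_mem_translations ha hb hab hg x.2⟩
      map_one' := Subtype.ext (by simp)
      map_mul' := fun x y => Subtype.ext (by simp) }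
  have hmem : ∀ i : ℕ, g ^ i * a * (g ^ i)⁻¹ ∈ line a b := fun i =>
    (Subgroup.mem_set_normalizer_iff.mp (Subgroup.pow_mem _ hg i) a).mp (left_mem_line ha hb)
  let c : ℕ → T := fun i =>
    ⟨a * (g ^ i * a * (g ^ i)⁻¹), hG.mul_mem_translations ha hb hab (left_mem_line ha hb) (hmem i)⟩
  have hc : ∀ i, c (i + 1) = c 1 * σ (c i) := by
    intro i
    apply Subtype.ext
    change a * (g ^ (i + 1) * a * (g ^ (i + 1))⁻¹) =
      a * (g ^ 1 * a * (g ^ 1)⁻¹) * (g * (a * (g ^ i * a * (g ^ i)⁻¹)) * g⁻¹)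
    have : a * (g ^ 1 * a * (g ^ 1)⁻¹) * (g * (a * (g ^ i * a * (g ^ i)⁻¹)) * g⁻¹) =
      a * (g * (a * a) * (g ^ i * a * (g ^ i)⁻¹) * g⁻¹) := by rw [pow_one]; group
    rw [this, ha.2, pow_succ']; group
  have h0 : c 0 = 1 := by
    apply Subtype.ext
    change a * (g ^ 0 * a * (g ^ 0)⁻¹) = 1
    simpa using ha.2
  have ho : c (orderOf g) = 1 := by
    apply Subtype.ext
    change a * (g ^ orderOf g * a * (g ^ orderOf g)⁻¹) = 1
    rw [pow_orderOf_eq_one]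
    simpa using ha.2
  obtain ⟨x, hx⟩ := exists_fixed_of_coprime σ c (orderOf g) hc h0 ho hcop
  refine ⟨a * x, x.2, ?_⟩
  have h : a * (g ^ 1 * a * (g ^ 1)⁻¹) * (g * x * g⁻¹) = x := congrArg Subtype.val hx
  rw [← mul_right_inj a, ha.mul_cancel]
  conv_rhs => rw [← h]
  rw [pow_one]; group

/-- An element stabilizing a line without fixing a point of it has a power that is a translation of
odd prime order `r`. Here `r` divides both the order of `g` and the number of translations; a power
of `g` of order `r` together with the translations of order `r` generates an `r`-group, which is
cyclic, so the two subgroups of order `r` coincide. -/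
theorem exists_pow_mem (hG : MinCex G) {a b : G} (ha : Invo a) (hb : Invo b)
    (hab : a ≠ b) {g : G} (hg : g ∈ Subgroup.normalizer (line a b))
    (hfree : ∀ w ∈ line a b, g * w * g⁻¹ ≠ w) :
    ∃ (j r : ℕ), r.Prime ∧ r ≠ 2 ∧ orderOf (g ^ j) = r ∧ g ^ j ∈ hG.translations ha hb hab := by
  have hcyc := hG.isCyclic_translations ha hb hab
  by_cases hcop : (Nat.card (hG.translations ha hb hab)).Coprime (orderOf g)
  · obtain ⟨w, hw, h⟩ := hG.exists_fixed_line ha hb hab hg hcop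
    exact absurd h (hfree w hw)
  obtain ⟨r, hr, hrT, m, hm⟩ := Nat.Prime.not_coprime_iff_dvd.mp hcop
  have hr' : Fact r.Prime := ⟨hr⟩
  have hr2 : r ≠ 2 := by
    rintro rfl; exact hG.not_two_dvd_translations ha hb hab hrT
  obtain ⟨k, hk⟩ := exists_prime_orderOf_dvd_card' (G := hG.translations ha hb hab) r hrT
  have hk' : orderOf (k : G) = r := by rw [Subgroup.orderOf_coe, hk]
  have hm0 : m ≠ 0 := by
    rintro rfl
    have := orderOf_pos g
    omega
  have hgo : orderOf (g ^ m) = r := by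
    rw [orderOf_pow_of_dvd hm0 ⟨r, by rw [hm, mul_comm]⟩, hm,
      Nat.mul_div_cancel _ (Nat.pos_of_ne_zero hm0)]
  refine ⟨m, r, hr, hr2, hgo, ?_⟩
  have hp : ∀ x : G, orderOf x = r → IsPGroup r (Subgroup.zpowers x) := fun x hx =>
    IsPGroup.of_card (n := 1) (by rw [Nat.card_zpowers, hx, pow_one])
  have hnorm : g ^ m ∈ Subgroup.normalizer (Subgroup.zpowers (k : G) : Set G) := by
    apply mem_normalizer_zpowers
    refine mem_zpowers_of_mem k.2
      (hG.conj_mem_translations ha hb hab (Subgroup.pow_mem _ hg m) k.2) ?_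
    exact (orderOf_injective (MulAut.conj (g ^ m)).toMonoidHom
      (MulAut.conj (g ^ m)).injective (k : G)).symm
  have hV := (hp _ hgo).to_sup_of_normal_right' (hp _ hk') (Subgroup.zpowers_le.mpr hnorm)
  have hVc := hG.good.odd r hr hr2 _ hV
  have h1 : g ^ m ∈ Subgroup.zpowers (k : G) :=
    mem_zpowers_of_mem (C := Subgroup.zpowers (g ^ m) ⊔ Subgroup.zpowers (k : G))
      (Subgroup.mem_sup_right (Subgroup.mem_zpowers _))
      (Subgroup.mem_sup_left (Subgroup.mem_zpowers _)) (hk'.trans hgo.symm)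
  exact Subgroup.zpowers_le.mpr k.2 h1

theorem no_fixed_invo (hG : MinCex G) {a b : G} (ha : Invo a) (hb : Invo b)
    (hab : a ≠ b) {g : G} (hg : g ∈ Subgroup.normalizer (line a b))
    (hfree : ∀ w ∈ line a b, g * w * g⁻¹ ≠ w) {t : G} (ht : Invo t) : g * t * g⁻¹ ≠ t := by
  intro h
  obtain ⟨j, r, hr, -, hj, hjT⟩ := hG.exists_pow_mem ha hb hab hg hfree
  refine hG.not_commute_translations ha hb hab hjT ?_ ht ?_
  · rintro e; rw [e, orderOf_one] at hj; exact hr.one_lt.ne hj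
  · have : Commute g t := mul_inv_eq_iff_eq_mul.mp h
    exact (this.pow_left j).symm

/-- Let `k` be a translation, of prime order, of the line through `a₂` and `b₂`. If `k` centralizes
`a * b` then `a` and `b` invert `k`: otherwise `Good.inverts_or_exists` would yield an involution
centralizing some conjugate of `⟨k⟩`. -/
theorem inverts_of_commute (hG : MinCex G) {a b k a₂ b₂ : G} {r : ℕ} (hr : r.Prime) (hr2 : r ≠ 2)
    (ha : Invo a) (hb : Invo b) (hab : a ≠ b) (ha₂ : Invo a₂) (hb₂ : Invo b₂) (hab₂ : a₂ ≠ b₂)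
    (hk : k ∈ hG.translations ha₂ hb₂ hab₂) (hkr : orderOf k = r)
    (hcomm : k * (a * b) = a * b * k) :
    a * k * a⁻¹ = k⁻¹ ∧ b * k * b⁻¹ = k⁻¹ := by
  let M := Subgroup.normalizer (Subgroup.zpowers (a * b) : Set G)
  have haM : a ∈ M := line_le_normalizer (left_mem_line ha hb)
  have hbM : b ∈ M := line_le_normalizer (right_mem_line ha hb)
  have hkM : k ∈ M := mem_normalizer_zpowers (by
    rw [hcomm, mul_assoc, mul_inv_cancel, mul_one]; exact Subgroup.mem_zpowers _)
  have hM : IsZGroup M := hG.isZGroup_normalizer ha hb hab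
  have hk1 : k ≠ 1 := by
    rintro rfl; rw [orderOf_one] at hkr; exact hr.one_lt.ne hkr
  have key : ∀ u v : G, u ∈ M → v ∈ M → Invo u → Invo v → u ≠ v → u * k * u⁻¹ = k⁻¹ := by
    intro u v huM hvM hu hv huv
    rcases (hG.good.subgroup M).inverts_or_exists hr (x := ⟨k, hkM⟩) (hu.coe_mk huM)
      (hv.coe_mk hvM) (fun e => huv (congrArg Subtype.val e)) (by simpa using hkr)
      with h | ⟨y, hy, hyu⟩
    · exact congrArg Subtype.val h
    · exfalso
      have hyu' : u * y = y * u := congrArg Subtype.val hyu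
      obtain ⟨g, i, hi⟩ := hG.good.exists_conj_zpowers hr hr2 hkr
        (show orderOf (y : G) = r by rw [Subgroup.orderOf_coe, hy])
      refine hG.not_commute_translations ha₂ hb₂ hab₂ hk hk1 (hu.conj g) ?_
      have hc : Commute (g * u * g⁻¹) (g * y * g⁻¹) := by
        have e1 : g * u * g⁻¹ * (g * y * g⁻¹) = g * (u * y) * g⁻¹ := by group
        have e2 : g * y * g⁻¹ * (g * u * g⁻¹) = g * (y * u) * g⁻¹ := by group
        rw [Commute, SemiconjBy, e1, e2, hyu']
      have hi' : (g * y * g⁻¹) ^ i = k := hi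
      rw [← hi']
      exact hc.zpow_right i
  exact ⟨key a b haM hbM ha hb hab, key b a hbM haM hb ha hab.symm⟩

/-- An element stabilizes at most one line without fixing a point of it: its powers that are
translations of the two lines commute, so by `inverts_of_commute` two points of the first line lie
on the second. -/
theorem line_unique (hG : MinCex G) {a b : G} (ha : Invo a) (hb : Invo b)
    (hab : a ≠ b) {a₂ b₂ : G} (ha₂ : Invo a₂) (hb₂ : Invo b₂) (hab₂ : a₂ ≠ b₂) {g : G}
    (hg : g ∈ Subgroup.normalizer (line a b)) (hg₂ : g ∈ Subgroup.normalizer (line a₂ b₂))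
    (hfree : ∀ w ∈ line a b, g * w * g⁻¹ ≠ w) (hfree₂ : ∀ w ∈ line a₂ b₂, g * w * g⁻¹ ≠ w) :
    line a b = line a₂ b₂ := by
  obtain ⟨i, p, hp, -, hi, hiT⟩ := hG.exists_pow_mem ha hb hab hg hfree
  obtain ⟨j, r, hr, hr2, hj, hjT⟩ := hG.exists_pow_mem ha₂ hb₂ hab₂ hg₂ hfree₂
  have hi1 : g ^ i ≠ 1 := by
    intro e; rw [e, orderOf_one] at hi; exact hp.one_lt.ne hi
  have hj1 : g ^ j ≠ 1 := by
    intro e; rw [e, orderOf_one] at hj; exact hr.one_lt.ne hj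
  have hb' : Invo (a * g ^ i) := And.left hiT
  obtain ⟨h1, h2⟩ := hG.inverts_of_commute hr hr2 ha hb' (ne_mul_self hi1) ha₂ hb₂ hab₂ hjT hj (by
    rw [ha.mul_cancel, ← pow_add, ← pow_add, add_comm])
  have e₂ := hG.line_translations ha₂ hb₂ hab₂ hjT hj1
  have m1 : a ∈ line a₂ b₂ := by
    rw [← e₂]; exact ⟨ha, by rw [ha₂.mul_cancel]; exact h1⟩
  have m2 : a * g ^ i ∈ line a₂ b₂ := by
    rw [← e₂]; exact ⟨hb', by rw [ha₂.mul_cancel]; exact h2⟩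
  rw [← hG.line_translations ha hb hab hiT hi1]
  exact hG.line_eq ha₂ hb₂ hab₂ m1 m2 (ne_mul_self hi1)

/-- The product `u * v` has odd order, and a power of it conjugates `u` to `v`. -/
theorem exists_conj_line (hG : MinCex G) {a b : G} (ha : Invo a) (hb : Invo b)
    (hab : a ≠ b) {u v : G} (hu : u ∈ line a b) (hv : v ∈ line a b) :
    ∃ g ∈ Subgroup.normalizer (line a b), g * u * g⁻¹ = v := by
  by_cases huv : u = v
  · exact ⟨1, one_mem _, by simp [huv]⟩
  obtain ⟨m, hm⟩ := hG.good.odd_orderOf hu.1 hv.1 huv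
  refine ⟨(u * v) ^ m, ?_, ?_⟩
  · rw [← hG.line_eq ha hb hab hu hv huv]
    exact mem_normalizer_line_of_commute ((Commute.refl (u * v)).pow_left m)
  · have h1 : u * (u * v) * u⁻¹ = (u * v)⁻¹ := (left_mem_line hu.1 hv.1).2
    have h2 : u * (u * v) ^ m * u⁻¹ = ((u * v) ^ m)⁻¹ := by rw [← conj_pow, h1, inv_pow]
    have h3 : u * ((u * v) ^ m)⁻¹ = (u * v) ^ m * u := by
      rw [← h2, ← mul_assoc, ← mul_assoc, hu.1.2, one_mul, hu.1.inv]
    have h4 : (u * v) ^ m * (u * v) ^ m = (u * v)⁻¹ := by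
      rw [eq_inv_iff_mul_eq_one, ← pow_add, ← pow_succ, ← two_mul, ← hm, pow_orderOf_eq_one]
    rw [mul_assoc, h3, ← mul_assoc, h4, mul_inv_rev, hu.1.inv, hv.1.inv, mul_assoc, hu.1.2, mul_one]

/-- The involutions fixed by an element that fixes `a` and `b`, but not every involution, lie on the
line through `a` and `b`, because the centralizer of the element has cyclic Sylow subgroups. -/
theorem mem_line_of_fixed (hG : MinCex G) {a b : G} (ha : Invo a) (hb : Invo b)
    (hab : a ≠ b) {g x w : G} (hgx : g * x * g⁻¹ ≠ x)
    (hga : g * a * g⁻¹ = a) (hgb : g * b * g⁻¹ = b) (hw : Invo w) (hgw : g * w * g⁻¹ = w) :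
    w ∈ line a b := by
  have hmem : ∀ y : G, g * y * g⁻¹ = y → y ∈ Subgroup.centralizer {g} := fun y hy =>
    Subgroup.mem_centralizer_singleton_iff.mpr (mul_inv_eq_iff_eq_mul.mp hy).symm
  have hne : Subgroup.centralizer {g} ≠ ⊤ := by
    intro h
    have : x ∈ Subgroup.centralizer {g} := h ▸ Subgroup.mem_top x
    rw [Subgroup.mem_centralizer_singleton_iff] at this
    exact hgx (mul_inv_eq_iff_eq_mul.mpr this.symm)
  have hz := hG.red _ hne a (hmem a hga) b (hmem b hgb) ha hb hab
  exact mem_line_of_commute ha hb hw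
    (hG.commute_of_mem hz (hmem a hga) (hmem b hgb) (hmem w hgw) ha hb hw)

/-- `line_eq_all` applied to the involutions and the lines through two of them. -/
theorem line_eq_invo (hG : MinCex G) {a b : G} (ha : Invo a) (hb : Invo b)
    (hab : a ≠ b) : line a b = {w | Invo w} := by
  classical
  have := Fintype.ofFinite G
  let I : Finset G := Finset.univ.filter Invo
  let ℓ : G × G → Finset G := fun p => (line p.1 p.2).toFinset
  let 𝓛 : Finset (Finset G) :=
    ((I ×ˢ I).filter fun p => p.1 ≠ p.2).image ℓ
  have hI : ∀ x, x ∈ I ↔ Invo x := fun x => by simp [I]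
  have hℓ : ∀ p, (ℓ p : Set G) = line p.1 p.2 := fun p => by simp [ℓ]
  have hmℓ : ∀ p x, x ∈ ℓ p ↔ x ∈ line p.1 p.2 := fun p x => by simp [ℓ]
  have h𝓛 : ∀ Λ ∈ 𝓛, ∃ p : G × G, Invo p.1 ∧ Invo p.2 ∧ p.1 ≠ p.2 ∧ ℓ p = Λ := by
    intro Λ hΛ
    obtain ⟨p, hp, rfl⟩ := Finset.mem_image.mp hΛ
    simp only [Finset.mem_filter, Finset.mem_product, hI] at hp
    exact ⟨p, hp.1.1, hp.1.2, hp.2, rfl⟩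
  have hin : ∀ x y, Invo x → Invo y → x ≠ y → ℓ (x, y) ∈ 𝓛 := by
    intro x y hx hy hxy
    refine Finset.mem_image.mpr ⟨(x, y), ?_, rfl⟩
    simp only [Finset.mem_filter, Finset.mem_product, hI]
    exact ⟨⟨hx, hy⟩, hxy⟩
  have key := line_eq_all I 𝓛 ?_ ?_ ?_ ?_ ?_ ?_ ?_ ?_ ?_ (ℓ (a, b)) (hin a b ha hb hab)
  · ext w
    rw [← hmℓ (a, b), key, hI]; rfl
  · exact fun g x hx => (hI _).mpr (((hI x).mp hx).conj g)
  · exact fun x hx y hy => hG.good.invo_conj ((hI x).mp hx) ((hI y).mp hy)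
  · intro Λ hΛ w hw
    obtain ⟨p, h1, h2, h3, rfl⟩ := h𝓛 Λ hΛ
    exact (hI w).mpr ((hmℓ p w).mp hw).1
  · intro Λ hΛ
    obtain ⟨p, h1, h2, h3, rfl⟩ := h𝓛 Λ hΛ
    exact Finset.one_lt_card.mpr ⟨p.1, (hmℓ p _).mpr (left_mem_line h1 h2), p.2,
      (hmℓ p _).mpr (right_mem_line h1 h2), h3⟩
  · intro x hx y hy hxy
    rw [hI] at hx hy
    exact ⟨ℓ (x, y), hin x y hx hy hxy, (hmℓ (x, y) _).mpr (left_mem_line hx hy),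
      (hmℓ (x, y) _).mpr (right_mem_line hx hy)⟩
  · intro Λ hΛ x hx y hy
    obtain ⟨p, h1, h2, h3, rfl⟩ := h𝓛 Λ hΛ
    rw [hℓ]
    exact hG.exists_conj_line h1 h2 h3 ((hmℓ p x).mp hx) ((hmℓ p y).mp hy)
  · rintro g ⟨z, -, hgz⟩ x hx y hy hxy hgx hgy
    rw [hI] at hx hy
    refine ⟨ℓ (x, y), hin x y hx hy hxy, ?_, fun w hw hgw => (hmℓ (x, y) w).mpr
      (hG.mem_line_of_fixed hx hy hxy hgz hgx hgy ((hI w).mp hw) hgw)⟩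
    rw [hℓ]
    have c1 : Commute g x := mul_inv_eq_iff_eq_mul.mp hgx
    have c2 : Commute g y := mul_inv_eq_iff_eq_mul.mp hgy
    exact mem_normalizer_line_of_commute (c1.mul_right c2)
  · intro Λ hΛ g hg hfree x hx
    obtain ⟨p, h1, h2, h3, rfl⟩ := h𝓛 Λ hΛ
    rw [hℓ] at hg
    exact hG.no_fixed_invo h1 h2 h3 hg (fun w hw => hfree w ((hmℓ p w).mpr hw)) ((hI x).mp hx)
  · intro Λ hΛ Λ' hΛ' g hg hg' hfree hfree'
    obtain ⟨p, h1, h2, h3, rfl⟩ := h𝓛 Λ hΛ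
    obtain ⟨q, h1', h2', h3', rfl⟩ := h𝓛 Λ' hΛ'
    rw [hℓ] at hg hg'
    have := hG.line_unique h1 h2 h3 h1' h2' h3' hg hg'
      (fun w hw => hfree w ((hmℓ p w).mpr hw)) (fun w hw => hfree' w ((hmℓ q w).mpr hw))
    ext w
    rw [hmℓ, hmℓ, this]

/-- When a line contains every involution its translations form a cyclic normal subgroup. It is
centralized by an involution from the derived subgroup, against `not_commute`. -/
theorem false_of_ne (hG : MinCex G) {a b : G} (ha : Invo a) (hb : Invo b)
    (hab : a ≠ b) : False := by
  have hline := hG.line_eq_invo ha hb hab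
  have hcyc := hG.isCyclic_translations ha hb hab
  have hn : (hG.translations ha hb hab).Normal := by
    refine ⟨fun x hx g => hG.conj_mem_translations ha hb hab ?_ hx⟩
    rw [hline, Subgroup.mem_set_normalizer_iff]
    refine fun w => ⟨fun hw => Invo.conj hw g, fun hw => ?_⟩
    have := Invo.conj hw g⁻¹
    have e : g⁻¹ * (g * w * g⁻¹) * g⁻¹⁻¹ = w := by group
    rwa [e] at this
  obtain ⟨z, hz, hz2⟩ := hG.invo_commutator
  have h1 := commutator_le_centralizer (hG.translations ha hb hab) hz
  exact hG.not_commute ha hb hab hz2 (Subgroup.mem_centralizer_iff.mp h1 _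
    (hG.mul_mem_translations ha hb hab (left_mem_line ha hb) (right_mem_line ha hb))).symm
end
end MinCex

/-- The uniqueness of the involution in the presence of a noncyclic `2`-subgroup, by induction on
the group order. A proper subgroup with two involutions has no noncyclic `2`-subgroup by the
induction hypothesis, so the group is a `MinCex` as soon as it has two involutions. -/
theorem Good.invo_unique {G : Type*} [Group G] [Finite G] (hG : Good G) (P : Subgroup G)
    (hP : IsPGroup 2 P) (hnc : ¬ IsCyclic P) {a b : G} (ha : Invo a) (hb : Invo b) : a = b := by
  induction hn : Nat.card G using Nat.strong_induction_on generalizing G with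
  | _ n ih =>
    by_contra hab
    refine MinCex.false_of_ne (G := G) ⟨hG, hG.exists_invo_commutator P hP hnc, ?_⟩ ha hb hab
    intro H hH c hc d hd hc2 hd2 hcd
    refine ⟨fun p hp R => ?_⟩
    by_contra hR
    have hp2 : p = 2 := by
      by_contra hp2
      exact hR ((hG.subgroup H).odd p hp hp2 R R.isPGroup')
    subst hp2
    have hlt : Nat.card H < n := by
      rw [← hn]
      refine lt_of_le_of_ne (Subgroup.card_le_card_group H) fun e => hH ?_
      exact Subgroup.eq_top_of_card_eq H e
    have := ih _ hlt (hG.subgroup H) R R.isPGroup' hR (hc2.coe_mk hc) (hd2.coe_mk hd) rfl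
    exact hcd (congrArg Subtype.val this)

/-! ### Cyclic and quaternion Sylow subgroups -/

theorem IsCyclic.invo_unique {C : Type*} [Group C] [Finite C] [IsCyclic C] {x y : C}
    (hx : Invo x) (hy : Invo y) : x = y := by
  obtain ⟨i, hi⟩ := mem_zpowers_of_orderOf_eq ((invo_iff.mp hx).trans (invo_iff.mp hy).symm)
  have hi' : x ^ i = y := hi
  rcases Int.even_or_odd' i with ⟨k, rfl | rfl⟩
  · exact absurd (by rw [← hi', zpow_mul, zpow_ofNat, sq, hx.2, one_zpow]) hy.1
  · rw [← hi', zpow_add, zpow_mul, zpow_ofNat, sq, hx.2, one_zpow, one_mul, zpow_one]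

theorem QuaternionGroup.invo_unique {n : ℕ} [NeZero n] {x y : QuaternionGroup n}
    (hx : Invo x) (hy : Invo y) : x = y := by
  have key : ∀ x : QuaternionGroup n, Invo x → x = a n := by
    rintro (i | i) h
    · have h1 : i + i = 0 := by
        have := h.2
        rw [a_mul_a, one_def] at this
        exact QuaternionGroup.a.inj this
      have h2 : i ≠ 0 := fun e => h.1 (by rw [e, one_def])
      have h3 : 2 * n ∣ 2 * i.val := by
        rw [← ZMod.natCast_eq_zero_iff, Nat.cast_mul, ZMod.natCast_zmod_val, Nat.cast_two]
        exact (two_mul i).trans h1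
      have h4 : n ∣ i.val := Nat.dvd_of_mul_dvd_mul_left two_pos h3
      have h5 : i.val ≠ 0 := fun e => h2 ((ZMod.val_eq_zero i).mp e)
      have h6 : i.val < 2 * n := ZMod.val_lt i
      obtain ⟨c, hc⟩ := h4
      have hc1 : c = 1 := by
        have hn := Nat.pos_of_ne_zero (NeZero.ne n)
        have : c < 2 := by
          by_contra hc2
          have := Nat.mul_le_mul_left n (not_lt.mp hc2)
          omega
        have : c ≠ 0 := by rintro rfl; omega
        omega
      rw [hc1, mul_one] at hc
      rw [← ZMod.natCast_zmod_val i, hc]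
    · have := orderOf_xa i
      rw [invo_iff.mp h] at this
      omega
  rw [key x hx, key y hy]

theorem invo_map_iff {G H : Type*} [Group G] [Group H] (e : G ≃* H) {x : G} :
    Invo (e x) ↔ Invo x := by
  rw [invo_iff, invo_iff, MulEquiv.orderOf_eq]

/-- Two commuting involutions generate a `2`-group, which lies in a Sylow subgroup; cyclic and
generalized quaternion groups have at most one involution. -/
theorem good_of_sylow {G : Type*} [Group G] [Finite G]
    (hSylow : ∀ (p : ℕ) (_ : p.Prime) (P : Sylow p G),
      IsCyclic P ∨ ∃ k : ℕ, 3 ≤ k ∧ Nonempty (P ≃* QuaternionGroup (2 ^ (k - 2)))) :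
    Good G where
  odd p hp hp2 P hP := by
    obtain ⟨Q, hQ⟩ := hP.exists_le_sylow
    have hQc : IsCyclic Q := by
      rcases hSylow p hp Q with h | ⟨k, -, ⟨e⟩⟩
      · exact h
      · exfalso
        have hp' : Fact p.Prime := ⟨hp⟩
        obtain ⟨n, hn⟩ := Q.isPGroup'.exists_card_eq
        have h4 := Nat.card_congr e.toEquiv
        rw [Nat.card_eq_fintype_card (α := QuaternionGroup _), QuaternionGroup.card] at h4
        have h2 : 2 ∣ p ^ n := by
          rw [← hn]
          rw [h4]; exact ⟨2 * 2 ^ (k - 2), by ring⟩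
        exact hp2 ((Nat.prime_dvd_prime_iff_eq Nat.prime_two hp).mp
          (Nat.prime_two.dvd_of_dvd_pow h2)).symm
    exact isCyclic_of_injective (Subgroup.inclusion hQ) (Subgroup.inclusion_injective hQ)
  comm a b ha hb hab := by
    have hV := ha.isPGroup_zpowers.to_sup_of_normal_right' hb.isPGroup_zpowers
      (Subgroup.zpowers_le.mpr (mem_normalizer_zpowers (g := a) (k := b) (by
        rw [hab, mul_assoc, mul_inv_cancel, mul_one]; exact Subgroup.mem_zpowers _)))
    obtain ⟨Q, hQ⟩ := hV.exists_le_sylow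
    have haQ : a ∈ Q := hQ (Subgroup.mem_sup_left (Subgroup.mem_zpowers a))
    have hbQ : b ∈ Q := hQ (Subgroup.mem_sup_right (Subgroup.mem_zpowers b))
    have ha' : Invo (⟨a, haQ⟩ : Q) := ha.coe_mk haQ
    have hb' : Invo (⟨b, hbQ⟩ : Q) := hb.coe_mk hbQ
    rcases hSylow 2 Nat.prime_two Q with h | ⟨k, -, ⟨e⟩⟩
    · exact congrArg Subtype.val (IsCyclic.invo_unique ha' hb')
    · exact congrArg Subtype.val (e.injective (QuaternionGroup.invo_unique
        ((invo_map_iff e).mpr ha') ((invo_map_iff e).mpr hb')))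

/-- Let `G` be a finite group all of whose Sylow subgroups are cyclic or generalized
quaternion (i.e. `G` has periodic cohomology).  If `G` is not metacyclic then `G` has a
unique involution, which is central and a square, and `4` divides the order of `G`. -/
theorem stmt1 {G : Type*} [Group G] [Fintype G]
    (hSylow : ∀ (p : ℕ) (_ : p.Prime) (P : Sylow p G),
      IsCyclic P ∨ ∃ k : ℕ, 3 ≤ k ∧ Nonempty (P ≃* QuaternionGroup (2 ^ (k - 2))))
    (hnotmeta : ¬ IsMetacyclic G) :
    ∃ g : G, orderOf g = 2 ∧ (∀ x : G, orderOf x = 2 → x = g) ∧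
      g ∈ Subgroup.center G ∧ (∃ h : G, h ^ 2 = g) ∧ 4 ∣ Fintype.card G := by
  have hG : Good G := good_of_sylow hSylow
  have hnz : ¬ IsZGroup G := fun hZ =>
    hnotmeta ⟨commutator G, inferInstance, IsZGroup.isCyclic_commutator G,
      IsZGroup.isCyclic_abelianization (G := G)⟩
  obtain ⟨p, hp, P, hP⟩ : ∃ (p : ℕ) (_ : p.Prime) (P : Sylow p G), ¬ IsCyclic P := by
    by_contra h
    push Not at h
    exact hnz ⟨h⟩
  have hp2 : p = 2 := by
    by_contra hp2
    exact hP (hG.odd p hp hp2 P P.isPGroup')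
  subst hp2
  obtain ⟨k, -, ⟨e⟩⟩ := (hSylow 2 hp P).resolve_left hP
  -- In the quaternion group `xa 0` has order four and its square is the involution.
  let h : P := e.symm (QuaternionGroup.xa 0)
  have h4 : orderOf (h : G) = 4 := by
    rw [Subgroup.orderOf_coe, MulEquiv.orderOf_eq, QuaternionGroup.orderOf_xa]
  have h2 : orderOf ((h : G) ^ 2) = 2 := by
    rw [orderOf_pow_of_dvd two_ne_zero (by rw [h4]; norm_num), h4]
  have huniq : ∀ x : G, orderOf x = 2 → x = (h : G) ^ 2 := fun x hx =>
    hG.invo_unique P P.isPGroup' hP (invo_iff.mpr hx) (invo_iff.mpr h2)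
  refine ⟨(h : G) ^ 2, h2, huniq, ?_, ⟨h, rfl⟩, h4 ▸ orderOf_dvd_card⟩
  rw [Subgroup.mem_center_iff]
  intro g
  exact mul_inv_eq_iff_eq_mul.mp
    (huniq _ (invo_iff.mp ((invo_iff.mpr h2).conj g)))
end

section
/- Let (G i) be a family of groups indexed by a type ι, H a group, and φ i : H →* G i injective homomorphisms. Let i ≠ j in ι, and let a ∈ G i with a not in the range of φ i, and b ∈ G j with b not in the range of φ j. Then the element (of i a) * (of j b) of the amalgamated free product Monoid.PushoutI φ has infinite order. -/
/-!
The power `(ab)^(n+1)` is represented by the alternating word `a, b, a, b, …, a, b` of length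
`2(n+1)`, none of whose letters lies in the image of `H`. By the normal form theorem for
amalgamated products (`Monoid.PushoutI.Reduced.eq_empty_of_mem_range`), a reduced word whose
product lies in the image of `H` is empty; the alternating word is nonempty, so `(ab)^(n+1) ≠ 1`.
-/

/-- The alternating word `a, b, …, a, b`, given as a nonempty reduced word starting in `G i` and
ending in `G j`, so that the next block `a, b` can be prepended. -/
theorem exists_reduced_neWord_prod_eq_pow {ι : Type*} {G : ι → Type*} [∀ i, Group (G i)]
    {H : Type*} [Group H] (φ : ∀ i, H →* G i)
    {i j : ι} (hij : i ≠ j) (a : G i) (ha : a ∉ (φ i).range)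
    (b : G j) (hb : b ∉ (φ j).range) (n : ℕ) :
    ∃ w : Monoid.CoprodI.NeWord G i j, Monoid.PushoutI.Reduced φ w.toWord ∧
      Monoid.PushoutI.ofCoprodI (φ := φ) w.prod =
        (Monoid.PushoutI.of (φ := φ) i a * Monoid.PushoutI.of (φ := φ) j b) ^ (n + 1) := by
  have ha1 : a ≠ 1 := fun h => ha (h ▸ one_mem _)
  have hb1 : b ≠ 1 := fun h => hb (h ▸ one_mem _)
  let u : Monoid.CoprodI.NeWord G i j := .append (.singleton a ha1) hij (.singleton b hb1)
  have hu : Monoid.PushoutI.Reduced φ u.toWord := by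
    intro g hg
    have hg' : g = ⟨i, a⟩ ∨ g = ⟨j, b⟩ := by
      simpa [u, Monoid.CoprodI.NeWord.toWord, Monoid.CoprodI.NeWord.toList] using hg
    rcases hg' with rfl | rfl
    · exact ha
    · exact hb
  have hup : Monoid.PushoutI.ofCoprodI (φ := φ) u.prod =
      Monoid.PushoutI.of (φ := φ) i a * Monoid.PushoutI.of (φ := φ) j b := by
    simp [u]
  induction n with
  | zero => exact ⟨u, hu, by simpa using hup⟩
  | succ n ih =>
    obtain ⟨w, hw, hwp⟩ := ih
    refine ⟨.append u hij.symm w, ?_, ?_⟩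
    · intro g hg
      rcases List.mem_append.mp hg with h | h
      · exact hu g h
      · exact hw g h
    · rw [Monoid.CoprodI.NeWord.append_prod, map_mul, hup, hwp, pow_succ' _ (n + 1)]

/-- In an amalgamated free product (pushout) of groups `G i` over a common subgroup `H`
(embedded via injective maps `φ i`), the product of an element of `G i` not in the image of
`H` with an element of `G j` (`j ≠ i`) not in the image of `H` has infinite order. -/
theorem stmt2 {ι : Type*} {G : ι → Type*} [∀ i, Group (G i)] {H : Type*} [Group H]
    (φ : ∀ i, H →* G i) (hφ : ∀ i, Function.Injective (φ i))
    {i j : ι} (hij : i ≠ j) (a : G i) (ha : a ∉ (φ i).range)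
    (b : G j) (hb : b ∉ (φ j).range) :
    ¬ IsOfFinOrder (Monoid.PushoutI.of (φ := φ) i a * Monoid.PushoutI.of (φ := φ) j b) := by
  rw [isOfFinOrder_iff_pow_eq_one]
  rintro ⟨m, hm, h⟩
  obtain ⟨n, rfl⟩ := Nat.exists_eq_succ_of_ne_zero hm.ne'
  obtain ⟨w, hw, hwp⟩ := exists_reduced_neWord_prod_eq_pow φ hij a ha b hb n
  have hempty : w.toWord = .empty := by
    refine hw.eq_empty_of_mem_range hφ ?_
    have h1 : Monoid.PushoutI.ofCoprodI (φ := φ) w.toWord.prod = 1 := hwp.trans h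
    rw [h1]
    exact one_mem _
  exact w.toList_ne_nil (congrArg Monoid.CoprodI.Word.toList hempty)
end

section
/- Let s ≥ 1 and m = 2s + 1. The presented group on two generators a, b with relators a² and a·bˢ·a·b^{-(s+1)} (i.e. the group ⟨a, b | a² = 1, a bˢ a = b^{s+1}⟩) is isomorphic to the dihedral group DihedralGroup m of order 2m. -/
/-!
In any group with `a² = 1` and `a bˢ a = b^{s+1}`, conjugating the second relation by `a` gives
`a b^{s+1} a = bˢ`, so `a b a = (a b^{s+1} a)(a bˢ a)⁻¹ = bˢ b^{-(s+1)} = b⁻¹`. Then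
`b^{s+1} = a bˢ a = b⁻ˢ`, i.e. `b^{2s+1} = 1`. These are the usual dihedral relations
(`dihedral_relations`), so `dihedralLift` provides a homomorphism from `DihedralGroup (2s+1)`;
it is inverse to the homomorphism `a ↦ sr 0`, `b ↦ r 1` out of the presented group.
-/

theorem dihedral_relations {G : Type*} [Group G] {a b : G} {s : ℕ} (ha : a * a = 1)
    (hab : a * b ^ s * a = b ^ (s + 1)) : a * b * a = b⁻¹ ∧ b ^ (2 * s + 1) = 1 := by
  have hainv : a⁻¹ = a := inv_eq_of_mul_eq_one_left ha
  have hconj : a * b ^ (s + 1) * a = b ^ s := by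
    rw [← hab]
    calc a * (a * b ^ s * a) * a = (a * a) * b ^ s * (a * a) := by group
      _ = b ^ s := by rw [ha]; group
  have hflip : a * b * a = b⁻¹ := by
    calc a * b * a = (a * b ^ (s + 1) * a) * (a⁻¹ * b ^ s * a)⁻¹ := by group
      _ = b⁻¹ := by rw [hainv, hab, hconj, pow_succ]; group
  refine ⟨hflip, ?_⟩
  have hpow : a * b ^ s * a = (b ^ s)⁻¹ := by
    have h := conj_pow (a := a) (b := b) (i := s)
    rw [hainv, hflip, inv_pow] at h
    exact h.symm
  have h : b ^ (s + 1) = (b ^ s)⁻¹ := hab.symm.trans hpow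
  rw [show 2 * s + 1 = s + (s + 1) by ring, pow_add, h, mul_inv_cancel]

/-- The homomorphism `r i ↦ bⁱ`, `sr i ↦ a bⁱ` from the dihedral group to a group in which
`a`, `b` satisfy the dihedral relations. The power `bⁱ` for `i : ZMod n` is taken with the
representative `i.cast : ℤ`. -/
def dihedralLift {G : Type*} [Group G] {n : ℕ} (a b : G) (ha : a * a = 1)
    (hflip : a * b * a = b⁻¹) (hb : b ^ n = 1) : DihedralGroup n →* G :=
  have key : ∀ (x : ZMod n) (k : ℤ), (k : ZMod n) = x → b ^ (x.cast : ℤ) = b ^ k := by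
    intro x k hk
    have hdvd : (n : ℤ) ∣ k - x.cast :=
      (ZMod.intCast_eq_intCast_iff_dvd_sub _ _ n).1 (by rw [ZMod.intCast_zmod_cast, hk])
    obtain ⟨c, hc⟩ := hdvd
    rw [show k = x.cast + n * c by omega, zpow_add, zpow_mul, zpow_natCast, hb, one_zpow, mul_one]
  have comm : ∀ k : ℤ, b ^ k * a = a * b ^ (-k) := by
    intro k
    have hainv : a⁻¹ = a := inv_eq_of_mul_eq_one_left ha
    have h := conj_zpow (a := a) (b := b) (i := k)
    rw [hainv, hflip, inv_zpow'] at h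
    rw [h, ← mul_assoc, ← mul_assoc, ha, one_mul]
  MonoidHom.mk'
    (fun
      | .r i => b ^ (i.cast : ℤ)
      | .sr i => a * b ^ (i.cast : ℤ))
    (by
      rintro (i | i) (j | j)
      · change b ^ ((i + j).cast : ℤ) = b ^ (i.cast : ℤ) * b ^ (j.cast : ℤ)
        rw [key (i + j) (i.cast + j.cast) (by simp), zpow_add]
      · change a * b ^ ((j - i).cast : ℤ) = b ^ (i.cast : ℤ) * (a * b ^ (j.cast : ℤ))
        rw [key (j - i) (-i.cast + j.cast) (by simp; ring), zpow_add, ← mul_assoc, ← mul_assoc,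
          comm]
      · change a * b ^ ((i + j).cast : ℤ) = a * b ^ (i.cast : ℤ) * b ^ (j.cast : ℤ)
        rw [key (i + j) (i.cast + j.cast) (by simp), zpow_add, mul_assoc]
      · change b ^ ((j - i).cast : ℤ) = a * b ^ (i.cast : ℤ) * (a * b ^ (j.cast : ℤ))
        rw [key (j - i) (-i.cast + j.cast) (by simp; ring), zpow_add, mul_assoc a, ← mul_assoc _ a,
          comm, ← mul_assoc, ← mul_assoc, ha, one_mul])

/-- For `s ≥ 1` and `m = 2s+1`, the group `⟨a, b ∣ a² = 1, a bˢ a = b^{s+1}⟩`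
is the dihedral group of order `2m`. -/
theorem stmt6 (s : ℕ) (hs : 1 ≤ s) :
    Nonempty
      (PresentedGroup
          ({FreeGroup.of 0 ^ 2,
            FreeGroup.of 0 * FreeGroup.of 1 ^ s * FreeGroup.of 0 *
              (FreeGroup.of 1 ^ (s + 1))⁻¹} : Set (FreeGroup (Fin 2)))
        ≃* DihedralGroup (2 * s + 1)) := by
  set rels : Set (FreeGroup (Fin 2)) := {FreeGroup.of 0 ^ 2,
            FreeGroup.of 0 * FreeGroup.of 1 ^ s * FreeGroup.of 0 *
              (FreeGroup.of 1 ^ (s + 1))⁻¹} with hrels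
  let a : PresentedGroup rels := PresentedGroup.of 0
  let b : PresentedGroup rels := PresentedGroup.of 1
  have ha : a * a = 1 := by
    have h := PresentedGroup.one_of_mem (rels := rels) (x := FreeGroup.of 0 ^ 2) (by simp [hrels])
    rw [map_pow, sq] at h
    exact h
  have hab : a * b ^ s * a = b ^ (s + 1) := by
    have h := PresentedGroup.one_of_mem (rels := rels) (x := FreeGroup.of 0 * FreeGroup.of 1 ^ s *
      FreeGroup.of 0 * (FreeGroup.of 1 ^ (s + 1))⁻¹) (by simp [hrels])
    simp only [map_mul, map_pow, map_inv] at h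
    exact mul_inv_eq_one.1 h
  obtain ⟨hflip, hb⟩ := dihedral_relations ha hab
  have hcast : (2 * s + 1 : ZMod (2 * s + 1)) = 0 := by
    exact_mod_cast ZMod.natCast_self (2 * s + 1)
  have hf : ∀ w ∈ rels, FreeGroup.lift
      (![.sr 0, .r 1] : Fin 2 → DihedralGroup (2 * s + 1)) w = 1 := by
    rintro w (rfl | rfl)
    · simp [sq]
    · simp only [map_mul, map_pow, map_inv, FreeGroup.lift_apply_of, Matrix.cons_val_zero,
        Matrix.cons_val_one, DihedralGroup.r_one_pow, DihedralGroup.sr_mul_r,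
        DihedralGroup.sr_mul_sr, DihedralGroup.inv_r, DihedralGroup.r_mul_r,
        DihedralGroup.one_def, DihedralGroup.r.injEq]
      push_cast
      linear_combination -hcast
  -- `s ≥ 1` makes `ZMod (2 * s + 1)` nontrivial, so the representative of `1` is `1`.
  have hone : ((1 : ZMod (2 * s + 1)).cast : ℤ) = 1 := by
    have : Fact (1 < 2 * s + 1) := ⟨by omega⟩
    rw [ZMod.cast_eq_val, ZMod.val_one, Nat.cast_one]
  let f := PresentedGroup.toGroup hf
  let g := dihedralLift a b ha hflip hb
  have hfa : f a = .sr 0 := PresentedGroup.toGroup.of hf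
  have hfb : f b = .r 1 := PresentedGroup.toGroup.of hf
  refine ⟨MonoidHom.toMulEquiv f g ?_ ?_⟩
  · ext i
    fin_cases i
    · change g (f a) = a
      rw [hfa]
      change a * b ^ ((0 : ZMod (2 * s + 1)).cast : ℤ) = a
      simp
    · change g (f b) = b
      rw [hfb]
      change b ^ ((1 : ZMod (2 * s + 1)).cast : ℤ) = b
      rw [hone, zpow_one]
  · ext x
    rcases x with i | i
    · change f (b ^ (i.cast : ℤ)) = .r i
      rw [map_zpow, hfb, DihedralGroup.r_one_zpow, ZMod.intCast_zmod_cast]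
    · change f (a * b ^ (i.cast : ℤ)) = .sr i
      rw [map_mul, map_zpow, hfa, hfb, DihedralGroup.r_one_zpow, ZMod.intCast_zmod_cast,
        DihedralGroup.sr_mul_r, zero_add]
end

section
/- Let s ≥ 1, m = 2s + 1, and work in the integral group ring ℤ[D_{2m}] = MonoidAlgebra ℤ (DihedralGroup m). Let a = sr 0, b = r 1, and ν_k = 1 + b + b² + ⋯ + b^{k-1} (the sum of the group elements r 0, …, r (k-1)). Then (1 + a·ν_s − ν_{s+1}) · (1 + a·bˢ) = 0 in ℤ[D_{2m}]. -/
/-!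
Only the relations `a² = 1` and `b a b = a` matter. Write `ν = 1 + b + ⋯ + b^{s-1}`. As
`ν_{s+1} = 1 + b ν`, the first factor is `(a - b) ν`. From `bⁱ a bⁱ = a` one gets
`bⁱ a bˢ = a bˢ⁻ⁱ` for `i ≤ s`, and summing over `i < s` gives `ν a bˢ = a b ν`. The product is
therefore `(a - b)(ν + a b ν) = a ν + b ν - b ν - (b a b) ν = 0`.
-/

theorem pow_mul_mul_pow_of_mul_mul {R : Type*} [Ring R] {a b : R} (h : b * a * b = a) (i : ℕ) :
    b ^ i * a * b ^ i = a := by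
  induction i with
  | zero => simp
  | succ i ih =>
    calc b ^ (i + 1) * a * b ^ (i + 1) = b ^ i * (b * a * b) * b ^ i := by
          rw [pow_succ b i, (Commute.refl b).pow_left i |>.eq]
          simp only [mul_assoc]
          rw [← mul_assoc (b ^ i) b, (Commute.refl b).pow_left i |>.eq, mul_assoc]
      _ = a := by rw [h, ih]

/-- Moving a partial geometric sum past `a bˢ` reverses it, since conjugation by `a`
inverts `b`. -/
theorem geom_sum_mul_mul_pow {R : Type*} [Ring R] {a b : R} (h : b * a * b = a) (s : ℕ) :
    (∑ i ∈ Finset.range s, b ^ i) * (a * b ^ s) = a * (b * ∑ i ∈ Finset.range s, b ^ i) := by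
  rw [Finset.sum_mul, ← Finset.sum_range_reflect (fun i => b ^ i) s, Finset.mul_sum,
    Finset.mul_sum]
  refine Finset.sum_congr rfl fun i hi => ?_
  have hi' : s = i + (s - 1 - i + 1) := by have := Finset.mem_range.mp hi; omega
  calc b ^ i * (a * b ^ s) = b ^ i * a * b ^ i * b ^ (s - 1 - i + 1) := by
        conv_lhs => rw [hi', pow_add]
        simp only [mul_assoc]
    _ = a * (b * b ^ (s - 1 - i)) := by
        rw [pow_mul_mul_pow_of_mul_mul h, pow_succ']

open DihedralGroup in
/-- In the integral group ring of the dihedral group `D_{2m}`, `m = 2s+1`, with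
`a = sr 0`, `b = r 1` and `ν k = 1 + b + ⋯ + b^{k-1}`, one has
`(1 + a ν_s − ν_{s+1})(1 + a bˢ) = 0`. -/
theorem stmt7 (s : ℕ) (hs : 1 ≤ s) :
    let a : MonoidAlgebra ℤ (DihedralGroup (2 * s + 1)) :=
      MonoidAlgebra.of ℤ (DihedralGroup (2 * s + 1)) (sr 0)
    let b : MonoidAlgebra ℤ (DihedralGroup (2 * s + 1)) :=
      MonoidAlgebra.of ℤ (DihedralGroup (2 * s + 1)) (r 1)
    let ν : ℕ → MonoidAlgebra ℤ (DihedralGroup (2 * s + 1)) :=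
      fun k => ∑ i ∈ Finset.range k, b ^ i
    (1 + a * ν s - ν (s + 1)) * (1 + a * b ^ s) = 0 := by
  intro a b ν
  have haa : a * a = 1 := by
    simp only [a, ← map_mul, sr_mul_self, map_one]
  have hbab : b * a * b = a := by
    simp only [a, b, ← map_mul, r_mul_sr, sr_mul_r, sub_add_cancel]
  have hν : ν (s + 1) = b * ν s + 1 := geom_sum_succ
  have hrev : ν s * (a * b ^ s) = a * (b * ν s) := geom_sum_mul_mul_pow hbab s
  calc (1 + a * ν s - ν (s + 1)) * (1 + a * b ^ s)
      = (a - b) * (ν s + ν s * (a * b ^ s)) := by rw [hν]; noncomm_ring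
    _ = a * ν s + a * a * (b * ν s) - b * ν s - b * a * b * ν s := by rw [hrev]; noncomm_ring
    _ = 0 := by rw [haa, hbab]; noncomm_ring
end

section
/- Let q ≥ 2, let p be a prime, and let r be an integer with r^q ≡ 1 (mod p). Let R = ℤ[X]/(X^q − 1) and let N be the quotient of the R-module R × R by the cyclic submodule generated by the element (p, X^{q−1} − r). Then N contains a nonzero element ν with p·ν = 0 and (X^{q−1} − r)·ν = 0; namely ν is the class of (Σ_{i=0}^{q−1} rⁱ Xⁱ, σ), where σ ∈ R satisfies (X^{q−1} − r)·(Σ_{i=0}^{q−1} rⁱ Xⁱ) = p·σ. -/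
/-!
Write `S = Σ_{i<q} rⁱ Xⁱ` and `g = (p, X^{q−1} − r)`. The relation `(X^{q−1} − r) S = p σ` gives
`p • (S, σ) = S • g` and `(X^{q−1} − r) • (S, σ) = σ • g`, so both multiples of `ν` vanish.
If `ν` were zero, then `S` would be a multiple of `p` in `R`; reducing modulo `p`, the polynomial
`S` of degree `< q` would be divisible by `X^q − 1` over `𝔽_p`, hence zero, although its constant
coefficient is `1` (`sum_ne_mul_prime`).
-/

open Polynomial in
/-- The ring `R = ℤ[X]/(X^q − 1)`, the integral group ring of the cyclic group of order `q`. -/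
abbrev RR (q : ℕ) : Type := ℤ[X] ⧸ Ideal.span ({X ^ q - 1} : Set ℤ[X])

open Polynomial in
/-- The image of the variable `X` in `ℤ[X]/(X^q − 1)`. -/
noncomputable def Xbar (q : ℕ) : RR q :=
  Ideal.Quotient.mk (Ideal.span ({X ^ q - 1} : Set ℤ[X])) X

open Polynomial in
/-- The element `Σ_{i<q} rⁱ Xⁱ` is not divisible by `p` in `ℤ[X]/(X^q − 1)`. -/
lemma sum_ne_mul_prime (q p : ℕ) (hq : 2 ≤ q) (hp : p.Prime) (r : ℤ) (a : RR q) :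
    a * (p : RR q) ≠ ∑ i ∈ Finset.range q, (r : RR q) ^ i * Xbar q ^ i := by
  intro h
  have : Fact p.Prime := ⟨hp⟩
  obtain ⟨A, rfl⟩ := Ideal.Quotient.mk_surjective a
  have h1 : Ideal.Quotient.mk (Ideal.span ({X ^ q - 1} : Set ℤ[X])) (A * (p : ℤ[X])) =
      Ideal.Quotient.mk _ (∑ i ∈ Finset.range q, (r : ℤ[X]) ^ i * X ^ i) := by
    simpa [Xbar] using h
  rw [eq_comm, Ideal.Quotient.eq, Ideal.mem_span_singleton] at h1
  have h2 := map_dvd (mapRingHom (Int.castRingHom (ZMod p))) h1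
  -- The multiple of `p` disappears in characteristic `p`.
  have h3 : (X ^ q - 1 : (ZMod p)[X]) ∣
      ∑ i ∈ Finset.range q, C ((r : ZMod p) ^ i) * X ^ i := by
    simpa [Polynomial.map_sum] using h2
  have hdeg : (∑ i ∈ Finset.range q, C ((r : ZMod p) ^ i) * X ^ i).degree
      < (X ^ q - 1 : (ZMod p)[X]).degree := by
    rw [← C_1, degree_X_pow_sub_C (by omega)]
    refine (degree_sum_le _ _).trans_lt ((Finset.sup_lt_iff (WithBot.bot_lt_coe q)).2 ?_)
    intro i hi
    exact (degree_C_mul_X_pow_le i _).trans_lt (WithBot.coe_lt_coe.2 (Nat.cast_lt.2 (Finset.mem_range.1 hi)))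
  have h4 := congrArg (fun f => coeff f 0) (eq_zero_of_dvd_of_degree_lt h3 hdeg)
  simp only [finsetSum_coeff, coeff_C_mul_X_pow, coeff_zero] at h4
  rw [Finset.sum_ite_eq, if_pos (Finset.mem_range.2 (by omega))] at h4
  simp at h4

/-- Let `q ≥ 2`, `p` prime, `r^q ≡ 1 (mod p)`, and let `N` be the quotient of `R × R`
(`R = ℤ[X]/(X^q − 1)`) by the cyclic submodule generated by `(p, X^{q−1} − r)`.  If
`σ ∈ R` satisfies `(X^{q−1} − r)(Σ_{i<q} rⁱ Xⁱ) = pσ`, then the class `ν` of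
`(Σ_{i<q} rⁱ Xⁱ, σ)` in `N` is a nonzero element with `pν = 0` and `(X^{q−1} − r)ν = 0`. -/
theorem stmt13 (q p : ℕ) (hq : 2 ≤ q) (hp : p.Prime) (r : ℤ) (hr : (p : ℤ) ∣ r ^ q - 1)
    (σ : RR q)
    (hσ : (Xbar q ^ (q - 1) - (r : RR q)) *
        (∑ i ∈ Finset.range q, (r : RR q) ^ i * Xbar q ^ i) = (p : RR q) * σ) :
    let N := (RR q × RR q) ⧸
      Submodule.span (RR q) ({((p : RR q), Xbar q ^ (q - 1) - (r : RR q))} : Set (RR q × RR q))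
    let ν : N := Submodule.Quotient.mk ((∑ i ∈ Finset.range q, (r : RR q) ^ i * Xbar q ^ i), σ)
    ν ≠ 0 ∧ (p : RR q) • ν = 0 ∧ (Xbar q ^ (q - 1) - (r : RR q)) • ν = 0 := by
  intro N ν
  refine ⟨?_, ?_, ?_⟩
  · intro h
    obtain ⟨a, ha⟩ := Submodule.mem_span_singleton.1 ((Submodule.Quotient.mk_eq_zero _).1 h)
    exact sum_ne_mul_prime q p hq hp r a (congrArg Prod.fst ha)
  · refine (Submodule.Quotient.mk_eq_zero _).2 (Submodule.mem_span_singleton.2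
      ⟨∑ i ∈ Finset.range q, (r : RR q) ^ i * Xbar q ^ i, Prod.ext (mul_comm _ _) ?_⟩)
    exact (mul_comm _ _).trans hσ
  · refine (Submodule.Quotient.mk_eq_zero _).2 (Submodule.mem_span_singleton.2
      ⟨σ, Prod.ext ?_ (mul_comm _ _)⟩)
    exact (mul_comm _ _).trans hσ.symm
end
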